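/- arXiv:0802.3434 — 2 statements merged into one kernel-verified Lean document; each statement's English description precedes it below -/
import Mathlib

section
/- Let X = {0,1}^ℕ with the shift T, and let (a_1, a_2, …) be a sequence of non-negative numbers with a_0 := 1 satisfying 1 = a_0 ≥ a_1 ≥ a_2 ≥ … and a_i − 2a_{i+1} + a_{i+2} ≥ 0 for all i ≥ 0. Then the Bowen topological entropy of the set R(a; {[0^n]}_{n≥1}) equals −h(1−a_1) + Σ_{j=0}^∞ h(a_j − 2a_{j+1} + a_{j+2}), where h(x) = −x log x (with h(0)=0). -/
open MeasureTheory Filter Topology Set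
open scoped ENNReal NNReal

/-!  General definitions: Bowen topological entropy (via covers by Bowen balls),
measure-theoretic (Kolmogorov–Sinai) entropy, generic points, saturated systems,
and the specification property. -/

variable {X : Type*}

/-- The Bowen ball of center `x`, order `n`, radius `ε` (for the metric
`d_n(x,y) = max_{0 ≤ j < n} d(T^j x, T^j y)`). -/
def bowenBall [PseudoMetricSpace X] (T : X → X) (x : X) (n : ℕ) (ε : ℝ) : Set X :=
  {y | ∀ j < n, dist (T^[j] x) (T^[j] y) < ε}

/-- `H_n^s(Z,ε)`: infimum of `Σ_i exp(-s n_i)` over countable covers of `Z` by Bowen balls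
`B_{n_i}(x_i,ε)` with all `n_i ≥ n`. -/
noncomputable def bowenH [PseudoMetricSpace X] (T : X → X) (Z : Set X) (s ε : ℝ) (n : ℕ) :
    ℝ≥0∞ :=
  ⨅ (C : Set (X × ℕ)) (_ : C.Countable) (_ : ∀ p ∈ C, n ≤ p.2)
    (_ : Z ⊆ ⋃ p ∈ C, bowenBall T p.1 p.2 ε),
    ∑' p : C, ENNReal.ofReal (Real.exp (-s * ((p : X × ℕ).2 : ℝ)))

/-- `h_top(Z,ε)`: the critical exponent of `s ↦ H^s(Z,ε) = sup_n H_n^s(Z,ε)`. -/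
noncomputable def bowenEntropyRes [PseudoMetricSpace X] (T : X → X) (Z : Set X) (ε : ℝ) :
    ℝ≥0∞ :=
  sInf ((fun s : ℝ≥0 => (s : ℝ≥0∞)) '' {s : ℝ≥0 | (⨆ n, bowenH T Z (s : ℝ) ε n) = 0})

/-- Bowen topological entropy of a subset `Z`: `h_top(Z) = lim_{ε → 0} h_top(Z,ε)`
(the limit being a supremum by monotonicity in `ε`). -/
noncomputable def bowenEntropy [PseudoMetricSpace X] (T : X → X) (Z : Set X) : ℝ≥0∞ :=
  ⨆ (ε : ℝ) (_ : 0 < ε), bowenEntropyRes T Z ε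

/-- Entropy of the partition `P ∨ T⁻¹P ∨ ⋯ ∨ T⁻⁽ⁿ⁻¹⁾P`, where a countable partition is
encoded as a function `P : X → ℕ`: it is the Shannon entropy of the map
`x ↦ (P x, P (T x), …, P (Tⁿ⁻¹ x))`. -/
noncomputable def partInfo [MeasurableSpace X] (T : X → X) (μ : Measure X) (P : X → ℕ)
    (n : ℕ) : ℝ≥0∞ :=
  ∑' l : List ℕ, ENNReal.ofReal (Real.negMulLog
    ((μ ((fun x => (List.range n).map fun j => P (T^[j] x)) ⁻¹' {l})).toReal))

/-- Measure-theoretic (Kolmogorov–Sinai) entropy `h_μ(T)`: supremum over finite measurable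
partitions `P` of `lim_n (1/n) H_μ(P ∨ T⁻¹P ∨ ⋯ ∨ T⁻⁽ⁿ⁻¹⁾P)` (the limit exists by
subadditivity, so it may be written as a `liminf`). -/
noncomputable def ksEntropy [MeasurableSpace X] (T : X → X) (μ : Measure X) : ℝ≥0∞ :=
  ⨆ (P : X → ℕ) (_ : Measurable P) (_ : (Set.range P).Finite),
    Filter.atTop.liminf fun n : ℕ => partInfo T μ P n / (n : ℝ≥0∞)

/-- `x` is a generic point for `μ` : the empirical measures `(1/n) Σ_{j<n} δ_{T^j x}`
converge to `μ` in the weak-star topology, i.e. Birkhoff averages of every continuous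
function converge to its integral. -/
def IsGeneric [TopologicalSpace X] [MeasurableSpace X] (T : X → X) (μ : Measure X)
    (x : X) : Prop :=
  ∀ f : C(X, ℝ), Tendsto (fun n : ℕ => (∑ j ∈ Finset.range n, f (T^[j] x)) / (n : ℝ))
    atTop (𝓝 (∫ y, f y ∂μ))

/-- `μ ∈ V(x)` : `μ` is a weak-star limit point of the empirical measures of `x`. -/
def IsLimitMeasure [TopologicalSpace X] [MeasurableSpace X] (T : X → X) (x : X)
    (μ : Measure X) : Prop :=
  ∃ φ : ℕ → ℕ, StrictMono φ ∧ ∀ f : C(X, ℝ),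
    Tendsto (fun m : ℕ => (∑ j ∈ Finset.range (φ m), f (T^[j] x)) / (φ m : ℝ))
      atTop (𝓝 (∫ y, f y ∂μ))

/-- A system is saturated if `h_top(G_μ) = h_μ` for every invariant Borel probability
measure `μ`. -/
def Saturated [PseudoMetricSpace X] [MeasurableSpace X] (T : X → X) : Prop :=
  ∀ μ : Measure X, IsProbabilityMeasure μ → MeasurePreserving T μ μ →
    bowenEntropy T {x | IsGeneric T μ x} = ksEntropy T μ

/-- The specification property. -/
def SpecificationProperty [PseudoMetricSpace X] (T : X → X) : Prop :=
  ∀ ε : ℝ, 0 < ε → ∃ m : ℕ, 1 ≤ m ∧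
    ∀ k : ℕ, 2 ≤ k → ∀ x : ℕ → X, ∀ a b : ℕ → ℕ,
      (∀ i < k, a i ≤ b i) →
      (∀ i, i + 1 < k → b i + m ≤ a (i + 1)) →
      ∃ y : X, ∀ i < k, ∀ n ≤ b i - a i,
        dist (T^[a i + n] y) (T^[n] (x i)) < ε

/-! Symbolic dynamics on `X = {0,1}^ℕ`. -/

/-- The metric `d(x,y) = (1/2)^(first difference)` on the symbolic space `{0,1}^ℕ`. -/
noncomputable instance : MetricSpace (ℕ → Bool) := PiNat.metricSpace

/-- The shift map on `{0,1}^ℕ`. -/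
def shift : (ℕ → Bool) → ℕ → Bool := fun x n => x (n + 1)

/-- The cylinder `[w]` of all sequences beginning with the finite word `w`. -/
def cyl (w : List Bool) : Set (ℕ → Bool) :=
  {x | ∀ i : Fin w.length, x i.1 = w.get i}

/-- `R(x,[w]) = r` : the frequency of visits of the orbit of `x` to the cylinder `[w]`
exists and equals `r`. -/
def hasFreq (w : List Bool) (x : ℕ → Bool) (r : ℝ) : Prop :=
  Filter.Tendsto (fun n : ℕ =>
      (∑ j ∈ Finset.range n, (cyl w).indicator (fun _ => (1 : ℝ)) (shift^[j] x)) / (n : ℝ))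
    Filter.atTop (nhds r)

/-! If `x` visits `[0^k]` with frequency `a k` for every `k`, then the word `1 0^j 1` occurs in `x`
with frequency `p j = a j - 2 a (j + 1) + a (j + 2)` and the symbol `1` with frequency `a 0 - a 1`.

Upper bound: describe `x` by coding each symbol given the number of zeros that follow it, truncated
at `K`. Kraft's inequality turns the mean code length into a bound on the number of words needed to
cover the set, and with the conditional frequencies as weights this mean length tends to the claimed
value as `K → ∞`.

Lower bound: separate consecutive ones by independent numbers of zeros with law `p j / (a 0 - a 1)`.
The strong law of large numbers gives the block frequencies up to the constant `lim a`, the mass of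
the fixed point `0^∞`. This mass is restored by a deterministic sequence of long zero blocks,
inserted so sparsely that they cost no entropy. The mass distribution principle applied to the law
of this sequence gives the bound. -/

section BowenEntropy

variable [PseudoMetricSpace X] {T : X → X} {Z : Set X} {s t ε M : ℝ} {E : ℕ → Finset X}

lemma bowenH_mono : Monotone (bowenH T Z s ε) := fun _ _ h =>
  le_iInf₂ fun C hC => le_iInf₂ fun hCN hZC =>
    iInf₂_le_of_le C hC (iInf₂_le (fun p hp => h.trans (hCN p hp)) hZC)

lemma bowenH_le_tsum_card_mul {n : ℕ} (hZ : ∀ x ∈ Z, ∃ m ≥ n, ∃ y ∈ E m, x ∈ bowenBall T y m ε) :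
    bowenH T Z s ε n ≤
      ∑' m, ((E (m + n)).card : ℝ≥0∞) * ENNReal.ofReal (Real.exp (-s * (m + n : ℕ))) := by
  let C (m : ℕ) : Finset (X × ℕ) := E (m + n) ×ˢ {m + n}
  have hmem {p : X × ℕ} {m : ℕ} : p ∈ C m ↔ p.1 ∈ E (m + n) ∧ p.2 = m + n := by
    simp only [C, Finset.mem_product, Finset.mem_singleton]
  refine (iInf₂_le_of_le (⋃ m, (C m : Set (X × ℕ)))
    (countable_iUnion fun m => (C m).countable_toSet) (iInf₂_le ?_ fun x hx => ?_)).trans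
    ((ENNReal.tsum_iUnion_le_tsum (fun p : X × ℕ => ENNReal.ofReal (Real.exp (-s * p.2)))
      fun m => (C m : Set (X × ℕ))).trans (ENNReal.tsum_le_tsum fun m => ?_))
  · rintro p hp
    obtain ⟨m, hm⟩ := mem_iUnion.1 hp
    exact (hmem.1 hm).2 ▸ Nat.le_add_left n m
  · obtain ⟨m, hnm, y, hy, hxy⟩ := hZ x hx
    refine mem_biUnion (x := (y, m)) (mem_iUnion.2 ⟨m - n, hmem.2 ?_⟩) hxy
    rw [Nat.sub_add_cancel hnm]
    exact ⟨hy, rfl⟩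
  · rw [Finset.tsum_subtype' (C m) fun p => ENNReal.ofReal (Real.exp (-s * p.2)),
      Finset.sum_product]
    simp

lemma iSup_bowenH_eq_zero_of_card_le (hE : ∀ n, ((E n).card : ℝ) ≤ M * Real.exp (t * n))
    (hZ : ∀ x ∈ Z, ∃ᶠ n in atTop, ∃ y ∈ E n, x ∈ bowenBall T y n ε) (hts : t < s) :
    ⨆ n, bowenH T Z s ε n = 0 := by
  let f (n : ℕ) : ℝ := M * Real.exp (t - s) ^ n
  have hterm (n : ℕ) :
      ((E n).card : ℝ≥0∞) * ENNReal.ofReal (Real.exp (-s * n)) ≤ ENNReal.ofReal (f n) := by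
    rw [← ENNReal.ofReal_natCast, ← ENNReal.ofReal_mul (Nat.cast_nonneg _)]
    refine ENNReal.ofReal_le_ofReal
      ((mul_le_mul_of_nonneg_right (hE n) (Real.exp_nonneg _)).trans_eq ?_)
    rw [mul_assoc, ← Real.exp_add, ← add_mul, ← sub_eq_add_neg, mul_comm (t - s), Real.exp_nat_mul]
  have hbound (n : ℕ) : bowenH T Z s ε n ≤ ∑' m, ENNReal.ofReal (f (m + n)) :=
    (bowenH_le_tsum_card_mul fun x hx => (frequently_atTop.1 (hZ x hx) n)).trans
      (ENNReal.tsum_le_tsum fun m => hterm (m + n))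
  have hf : Summable f := (summable_geometric_of_lt_one (Real.exp_nonneg _)
    (Real.exp_lt_one_iff.2 (sub_neg.2 hts))).mul_left M
  have htail := ENNReal.tendsto_sum_nat_add (fun n => ENNReal.ofReal (f n)) hf.tsum_ofReal_ne_top
  refine le_antisymm (iSup_le fun n => ge_of_tendsto htail ?_) bot_le
  filter_upwards [eventually_ge_atTop n] with m hm
  exact (bowenH_mono hm).trans (hbound m)

theorem bowenEntropyRes_le_of_card_le (hE : ∀ n, ((E n).card : ℝ) ≤ M * Real.exp (t * n))
    (hZ : ∀ x ∈ Z, ∃ᶠ n in atTop, ∃ y ∈ E n, x ∈ bowenBall T y n ε) :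
    bowenEntropyRes T Z ε ≤ ENNReal.ofReal t := by
  refine le_of_forall_gt_imp_ge_of_dense fun s hs => ?_
  obtain ⟨r, htr, hrs⟩ := ENNReal.lt_iff_exists_nnreal_btwn.1 hs
  rw [← ENNReal.ofReal_coe_nnreal] at htr
  have hr := iSup_bowenH_eq_zero_of_card_le hE hZ (ENNReal.ofReal_lt_ofReal_iff'.1 htr).1
  have hle : bowenEntropyRes T Z ε ≤ r := sInf_le ⟨r, hr, rfl⟩
  exact hle.trans hrs.le

lemma bowenBall_subset_bowenBall_two_mul {c y : X} {n : ℕ} (hy : y ∈ bowenBall T c n ε) :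
    bowenBall T c n ε ⊆ bowenBall T y n (2 * ε) := fun z hz j hj => by
  linarith [dist_triangle_left (T^[j] y) (T^[j] z) (T^[j] c), hy j hj, hz j hj]

variable {Ω : Type*} [MeasurableSpace Ω] {P : Measure Ω} {x : Ω → X}

lemma measure_le_bowenH {A : Set Ω} {N : ℕ} (hA : ∀ ω ∈ A, x ω ∈ Z ∧ ∀ m ≥ N,
      P {ω' | x ω' ∈ bowenBall T (x ω) m (2 * ε)} ≤ ENNReal.ofReal (Real.exp (-s * m))) :
    P A ≤ bowenH T Z s ε N := by
  refine le_iInf₂ fun C hC => le_iInf₂ fun hCN hZC => ?_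
  have : Countable C := hC
  have hsub : A ⊆ ⋃ p : C, A ∩ x ⁻¹' bowenBall T p.1.1 p.1.2 ε := fun ω hω => by
    obtain ⟨p, hp, hmem⟩ := mem_iUnion₂.1 (hZC (hA ω hω).1)
    exact mem_iUnion.2 ⟨⟨p, hp⟩, hω, hmem⟩
  refine (measure_mono hsub).trans
    ((measure_iUnion_le _).trans (ENNReal.tsum_le_tsum fun p => ?_))
  rcases (A ∩ x ⁻¹' bowenBall T p.1.1 p.1.2 ε).eq_empty_or_nonempty with he | ⟨ω, hω, hωp⟩
  · simp [he]
  · refine (measure_mono ?_).trans ((hA ω hω).2 p.1.2 (hCN _ p.2))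
    exact fun ω' hω' => bowenBall_subset_bowenBall_two_mul hωp hω'.2

/-- The mass distribution principle. -/
theorem ofReal_le_bowenEntropyRes_of_measure_bowenBall_le [NeZero P]
    (h : ∀ᵐ ω ∂P, x ω ∈ Z ∧ ∀ᶠ m : ℕ in atTop,
      P {ω' | x ω' ∈ bowenBall T (x ω) m (2 * ε)} ≤ ENNReal.ofReal (Real.exp (-s * m))) :
    ENNReal.ofReal s ≤ bowenEntropyRes T Z ε := by
  refine le_sInf ?_
  rintro _ ⟨r, hr, rfl⟩
  refine ENNReal.ofReal_le_coe.2 (le_of_not_gt fun hrs => NeZero.ne P ?_)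
  let A (N : ℕ) : Set Ω := {ω | x ω ∈ Z ∧ ∀ m ≥ N,
    P {ω' | x ω' ∈ bowenBall T (x ω) m (2 * ε)} ≤ ENNReal.ofReal (Real.exp (-r * m))}
  have hA (N : ℕ) : P (A N) = 0 :=
    le_antisymm ((measure_le_bowenH fun _ hω => hω).trans
      ((le_iSup (bowenH T Z r ε) N).trans_eq hr)) bot_le
  have hcover : ∀ᵐ ω ∂P, ω ∈ ⋃ N, A N := by
    filter_upwards [h] with ω ⟨hZ, hω⟩
    obtain ⟨N, hN⟩ := eventually_atTop.1 hω
    refine mem_iUnion.2 ⟨N, hZ, fun m hm => (hN m hm).trans (ENNReal.ofReal_le_ofReal ?_)⟩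
    gcongr
  rw [← Measure.measure_univ_eq_zero, ← measure_congr (eventuallyEq_univ.2 hcover)]
  exact measure_iUnion_null hA

end BowenEntropy

section BirkhoffAverages

lemma tendsto_birkhoffAverage_comp {T : X → X} {g : X → ℝ} {x : X} {r : ℝ}
    (hg : Bornology.IsBounded (range g))
    (h : Tendsto (birkhoffAverage ℝ T g · x) atTop (𝓝 r)) :
    Tendsto (birkhoffAverage ℝ T (g ∘ T) · x) atTop (𝓝 r) := by
  have hdiff := (tendsto_birkhoffAverage_apply_sub_birkhoffAverage' ℝ hg T x).add h
  simp only [sub_add_cancel, zero_add] at hdiff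
  refine hdiff.congr fun n => ?_
  simp only [birkhoffAverage, birkhoffSum, Function.comp_apply, ← Function.iterate_succ_apply,
    Function.iterate_succ_apply']

lemma tendsto_birkhoffAverage_clm {ι : Type*} {T : X → X} {x : X} {b : ι → X → ℝ} {c : ι → ℝ}
    (Φ : (ι → ℝ) →L[ℝ] ℝ) (h : ∀ i, Tendsto (birkhoffAverage ℝ T (b i) · x) atTop (𝓝 (c i))) :
    Tendsto (birkhoffAverage ℝ T (fun y => Φ fun i => b i y) · x) atTop (𝓝 (Φ c)) := by
  refine ((Φ.continuous.tendsto c).comp (tendsto_pi_nhds.2 h)).congr fun n => ?_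
  let g (y : X) (i : ι) : ℝ := b i y
  have hcoord (i : ι) : birkhoffAverage ℝ T (b i) n x = birkhoffAverage ℝ T g n x i :=
    (map_birkhoffAverage ℝ ℝ (ContinuousLinearMap.proj (R := ℝ) (φ := fun _ : ι => ℝ) i)
      T g n x).symm
  exact (congrArg Φ (funext hcoord)).trans (map_birkhoffAverage ℝ ℝ Φ T g n x)

end BirkhoffAverages

section SymbolicDynamics

lemma shift_iterate_apply (j : ℕ) (x : ℕ → Bool) (n : ℕ) : shift^[j] x n = x (n + j) := by
  induction j generalizing x with
  | zero => rfl
  | succ j ih => rw [Function.iterate_succ_apply, ih]; rfl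

lemma exists_forall_mem_bowenBall_shift {ε : ℝ} (hε : 0 < ε) :
    ∃ M, ∀ (n : ℕ) (x y : ℕ → Bool), (∀ i < n + M, x i = y i) → x ∈ bowenBall shift y n ε := by
  obtain ⟨M, hM⟩ := exists_pow_lt_of_lt_one hε (by norm_num : (1 / 2 : ℝ) < 1)
  refine ⟨M, fun n x y h j hj => (PiNat.mem_cylinder_iff_dist_le.1 fun i hi => ?_).trans_lt hM⟩
  rw [shift_iterate_apply, shift_iterate_apply, h _ (by omega)]

lemma eq_of_mem_bowenBall_shift_one {x y : ℕ → Bool} {n : ℕ} (h : y ∈ bowenBall shift x n 1) :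
    ∀ i < n, y i = x i := fun i hi => by
  have := PiNat.apply_eq_of_dist_lt (n := 0) ((h i hi).trans_eq (pow_zero _).symm) le_rfl
  simpa only [shift_iterate_apply, zero_add] using this.symm

/-- The sequence `b y₀ y₁ y₂ ⋯`. -/
def consSeq (b : Bool) (y : ℕ → Bool) : ℕ → Bool
  | 0 => b
  | n + 1 => y n

lemma shift_consSeq (b : Bool) (y : ℕ → Bool) : shift (consSeq b y) = y := rfl

/-- Representatives of the words of length `n`: the sequences that vanish from position `n` on. -/
noncomputable def wordReps : ℕ → Finset (ℕ → Bool)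
  | 0 => {fun _ => false}
  | n + 1 => open Classical in Finset.image₂ consSeq Finset.univ (wordReps n)

lemma exists_mem_wordReps (n : ℕ) (x : ℕ → Bool) : ∃ y ∈ wordReps n, ∀ i < n, x i = y i := by
  classical
  induction n generalizing x with
  | zero => exact ⟨_, Finset.mem_singleton_self _, by simp⟩
  | succ n ih =>
    obtain ⟨y, hy, h⟩ := ih (shift x)
    refine ⟨consSeq (x 0) y, Finset.mem_image₂_of_mem (Finset.mem_univ _) hy, fun i hi => ?_⟩
    cases i with
    | zero => rfl
    | succ i => exact h i (by omega)

lemma card_wordReps_le (n : ℕ) : (wordReps n).card ≤ 2 ^ n := by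
  classical
  induction n with
  | zero => simp [wordReps]
  | succ n ih =>
    refine (Finset.card_image₂_le _ _ _).trans ?_
    rw [Finset.card_univ, Fintype.card_bool, pow_succ']
    gcongr

variable {g : (ℕ → Bool) → ℝ} {K n : ℕ} {t : ℝ}

/-- Kraft's inequality. -/
lemma sum_wordReps_exp_neg_birkhoffSum_le
    (hg : ∀ y, Real.exp (-g (consSeq true y)) + Real.exp (-g (consSeq false y)) ≤ 1) (n M : ℕ) :
    ∑ x ∈ wordReps (n + M), Real.exp (-birkhoffSum shift g n x) ≤ 2 ^ M := by
  classical
  induction n with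
  | zero => simpa [birkhoffSum_zero] using mod_cast card_wordReps_le M
  | succ n ih =>
    rw [add_right_comm, wordReps, Finset.image₂]
    refine (Finset.sum_image_le_of_nonneg fun _ _ => Real.exp_nonneg _).trans ?_
    rw [Finset.sum_product_right]
    refine (Finset.sum_le_sum fun y _ => ?_).trans ih
    simp only [Function.uncurry, Fintype.sum_bool, birkhoffSum_succ', shift_consSeq, neg_add,
      Real.exp_add, ← add_mul]
    exact mul_le_of_le_one_left (Real.exp_nonneg _) (hg y)

lemma birkhoffSum_shift_congr (hloc : ∀ x y : ℕ → Bool, (∀ i < K, x i = y i) → g x = g y)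
    {x y : ℕ → Bool} (h : ∀ i < n + K, x i = y i) :
    birkhoffSum shift g n x = birkhoffSum shift g n y := by
  refine Finset.sum_congr rfl fun j hj => hloc _ _ fun i hi => ?_
  have := Finset.mem_range.1 hj
  rw [shift_iterate_apply, shift_iterate_apply, h _ (by omega)]

lemma card_filter_wordReps_le
    (hg : ∀ y, Real.exp (-g (consSeq true y)) + Real.exp (-g (consSeq false y)) ≤ 1) (n M : ℕ) :
    ((wordReps (n + M)).filter fun y => birkhoffSum shift g n y ≤ n * t).card ≤
      2 ^ M * Real.exp (t * n) := by
  rw [← div_le_iff₀ (Real.exp_pos _), div_eq_mul_inv, ← Real.exp_neg, ← nsmul_eq_mul]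
  refine (Finset.card_nsmul_le_sum _ _ _ fun y hy => ?_).trans
    ((Finset.sum_le_sum_of_subset_of_nonneg (Finset.filter_subset _ _)
      fun _ _ _ => Real.exp_nonneg _).trans (sum_wordReps_exp_neg_birkhoffSum_le hg n M))
  exact Real.exp_le_exp.2 (neg_le_neg ((Finset.mem_filter.1 hy).2.trans_eq (mul_comm _ _)))

theorem bowenEntropy_shift_le_of_birkhoffSum_le {Z : Set (ℕ → Bool)}
    (hloc : ∀ x y : ℕ → Bool, (∀ i < K, x i = y i) → g x = g y)
    (hg : ∀ y, Real.exp (-g (consSeq true y)) + Real.exp (-g (consSeq false y)) ≤ 1)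
    (hZ : ∀ x ∈ Z, ∃ᶠ n : ℕ in atTop, birkhoffSum shift g n x ≤ n * t) :
    bowenEntropy shift Z ≤ ENNReal.ofReal t := by
  refine iSup₂_le fun ε hε => ?_
  obtain ⟨M, hM⟩ := exists_forall_mem_bowenBall_shift hε
  refine bowenEntropyRes_le_of_card_le (fun n => card_filter_wordReps_le hg n (max M K))
    fun x hx => (hZ x hx).mono fun n hn => ?_
  obtain ⟨y, hy, hxy⟩ := exists_mem_wordReps (n + max M K) x
  refine ⟨y, Finset.mem_filter.2 ⟨hy, ?_⟩, hM n x y fun i hi => hxy i (by omega)⟩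
  rwa [← birkhoffSum_shift_congr hloc fun i hi => hxy i (by omega)]

theorem ofReal_le_bowenEntropy_shift {Ω : Type*} [MeasurableSpace Ω] {P : Measure Ω} [NeZero P]
    {x : Ω → ℕ → Bool} {Z : Set (ℕ → Bool)} {s : ℝ}
    (h : ∀ᵐ ω ∂P, x ω ∈ Z ∧ ∀ᶠ m : ℕ in atTop,
      P {ω' | ∀ i < m, x ω' i = x ω i} ≤ ENNReal.ofReal (Real.exp (-s * m))) :
    ENNReal.ofReal s ≤ bowenEntropy shift Z := by
  refine le_iSup₂_of_le (1 / 2 : ℝ) one_half_pos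
    (ofReal_le_bowenEntropyRes_of_measure_bowenBall_le (P := P) (x := x) ?_)
  filter_upwards [h] with ω ⟨hZ, hω⟩
  refine ⟨hZ, hω.mono fun m hm => (measure_mono fun ω' hω' => ?_).trans hm⟩
  rw [mul_one_div_cancel two_ne_zero] at hω'
  exact eq_of_mem_bowenBall_shift_one hω'

end SymbolicDynamics

section ZeroRuns

/-- The indicator function of the cylinder `[0^k]`. -/
noncomputable def zeroInd (k : ℕ) : (ℕ → Bool) → ℝ :=
  (cyl (List.replicate k false)).indicator fun _ => 1

open Classical in
lemma zeroInd_eq (k : ℕ) (x : ℕ → Bool) :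
    zeroInd k x = if ∀ i < k, x i = false then 1 else 0 := by
  simp [zeroInd, indicator, cyl, Fin.forall_iff]

lemma zeroInd_zero (x : ℕ → Bool) : zeroInd 0 x = 1 := by simp [zeroInd_eq]

lemma zeroInd_succ (k : ℕ) (x : ℕ → Bool) :
    zeroInd (k + 1) x = if x 0 then 0 else zeroInd k (shift x) := by
  simp only [zeroInd_eq, Nat.forall_lt_succ_left]
  cases x 0
  · simp only [true_and, Bool.false_eq_true, if_false]
    rfl
  · simp

lemma zeroInd_nonneg (k : ℕ) (x : ℕ → Bool) : 0 ≤ zeroInd k x :=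
  indicator_nonneg (fun _ _ => zero_le_one) x

lemma isBounded_range_zeroInd (k : ℕ) : Bornology.IsBounded (range (zeroInd k)) :=
  (toFinite ({0, 1} : Set ℝ)).isBounded.subset <| range_subset_iff.2 fun x => by
    rw [zeroInd_eq]; split_ifs <;> simp

/-- The number of zeros at the beginning of `x`, truncated at `K`. -/
def zeroRun : ℕ → (ℕ → Bool) → ℕ
  | 0, _ => 0
  | K + 1, x => if x 0 then 0 else zeroRun K (shift x) + 1

lemma zeroRun_congr {K : ℕ} {x y : ℕ → Bool} (h : ∀ i < K, x i = y i) :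
    zeroRun K x = zeroRun K y := by
  induction K generalizing x y with
  | zero => rfl
  | succ K ih =>
    rw [zeroRun, zeroRun, h 0 K.succ_pos,
      ih (x := shift x) (y := shift y) fun i hi => h (i + 1) (by omega)]

/-- The expectation of `d (min N K)` for a random `N` with tail probabilities `b r = P (r ≤ N)`,
as a linear functional of `b`. -/
noncomputable def truncMean (K : ℕ) (d : ℕ → ℝ) : (ℕ → ℝ) →L[ℝ] ℝ :=
  let π (r : ℕ) : (ℕ → ℝ) →L[ℝ] ℝ := ContinuousLinearMap.proj r
  ∑ r ∈ Finset.range K, d r • (π r - π (r + 1)) + d K • π K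

lemma truncMean_apply (K : ℕ) (d b : ℕ → ℝ) :
    truncMean K d b = ∑ r ∈ Finset.range K, d r * (b r - b (r + 1)) + d K * b K := by
  simp [truncMean]

lemma apply_zeroRun (K : ℕ) (d : ℕ → ℝ) (x : ℕ → Bool) :
    d (zeroRun K x) = truncMean K d fun r => zeroInd r x := by
  induction K generalizing d x with
  | zero => simp [zeroRun, truncMean_apply, zeroInd_zero]
  | succ K ih =>
    rw [truncMean_apply, Finset.sum_range_succ']
    cases hx : x 0
    · simpa [zeroRun, zeroInd_succ, zeroInd_zero, hx, truncMean_apply] using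
        ih (fun r => d (r + 1)) (shift x)
    · simp [zeroRun, zeroInd_succ, zeroInd_zero, hx]

/-- The set of all `x` that visit each cylinder `[0^k]` with frequency `a k`. -/
def zeroFreqSet (a : ℕ → ℝ) : Set (ℕ → Bool) :=
  {x | ∀ k, Tendsto (birkhoffAverage ℝ shift (zeroInd k) · x) atTop (𝓝 (a k))}

lemma hasFreq_replicate_false_iff {k : ℕ} {x : ℕ → Bool} {r : ℝ} :
    hasFreq (List.replicate k false) x r ↔
      Tendsto (birkhoffAverage ℝ shift (zeroInd k) · x) atTop (𝓝 r) := by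
  simp only [hasFreq, birkhoffAverage, birkhoffSum, zeroInd, smul_eq_mul, inv_mul_eq_div]

lemma tendsto_birkhoffAverage_zeroInd_zero (x : ℕ → Bool) :
    Tendsto (birkhoffAverage ℝ shift (zeroInd 0) · x) atTop (𝓝 1) := by
  refine tendsto_const_nhds.congr' ?_
  filter_upwards [eventually_ne_atTop 0] with n hn
  simp [birkhoffAverage, birkhoffSum, zeroInd_zero, hn]

lemma setOf_hasFreq_eq_zeroFreqSet {a : ℕ → ℝ} (ha : a 0 = 1) :
    {x | ∀ k : ℕ, 1 ≤ k → hasFreq (List.replicate k false) x (a k)} = zeroFreqSet a := by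
  refine Set.ext fun x => ⟨fun h k => ?_, fun h k _ => hasFreq_replicate_false_iff.2 (h k)⟩
  rcases k.eq_zero_or_pos with rfl | hk
  · exact ha ▸ tendsto_birkhoffAverage_zeroInd_zero x
  · exact hasFreq_replicate_false_iff.1 (h k hk)

end ZeroRuns

section CodeLength

variable {K : ℕ} {w : ℕ → ℝ}

/-- The length of the code word for `x 0` given the number `r` of zeros that follow it, truncated
at `K`, when the conditional probability of the symbol `1` is `w r`. -/
noncomputable def codeLength (K : ℕ) (w : ℕ → ℝ) (x : ℕ → Bool) : ℝ :=
  if x 0 then -Real.log (w (zeroRun K (shift x))) else -Real.log (1 - w (zeroRun K (shift x)))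

lemma exp_neg_codeLength_add (hw : ∀ r, w r ∈ Ioo 0 1) (y : ℕ → Bool) :
    Real.exp (-codeLength K w (consSeq true y)) + Real.exp (-codeLength K w (consSeq false y)) =
      1 := by
  simp [codeLength, consSeq, shift_consSeq, Real.exp_log (hw _).1,
    Real.exp_log (sub_pos.2 (hw _).2)]

lemma codeLength_congr {x y : ℕ → Bool} (h : ∀ i < K + 1, x i = y i) :
    codeLength K w x = codeLength K w y := by
  have hrun : zeroRun K (shift x) = zeroRun K (shift y) :=
    zeroRun_congr fun i hi => h (i + 1) (by omega)
  rw [codeLength, codeLength, h 0 K.succ_pos, hrun]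

lemma codeLength_eq_truncMean_add (K : ℕ) (w : ℕ → ℝ) (x : ℕ → Bool) : codeLength K w x =
    truncMean K (fun r => -Real.log (w r)) (fun r => zeroInd r (shift x) - zeroInd (r + 1) x) +
      truncMean K (fun r => -Real.log (1 - w r)) (fun r => zeroInd (r + 1) x) := by
  rw [codeLength, apply_zeroRun K fun r => -Real.log (w r),
    apply_zeroRun K fun r => -Real.log (1 - w r)]
  cases hx : x 0 <;> simp [zeroInd_succ, hx, truncMean_apply]

/-- The mean of `codeLength K w` when `[0^k]` has frequency `a k`. -/
noncomputable def codeRate (a : ℕ → ℝ) (K : ℕ) (w : ℕ → ℝ) : ℝ :=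
  truncMean K (fun r => -Real.log (w r)) (fun r => a r - a (r + 1)) +
    truncMean K (fun r => -Real.log (1 - w r)) (fun r => a (r + 1))

lemma tendsto_birkhoffAverage_codeLength {a : ℕ → ℝ} {x : ℕ → Bool} (hx : x ∈ zeroFreqSet a)
    (K : ℕ) (w : ℕ → ℝ) :
    Tendsto (birkhoffAverage ℝ shift (codeLength K w) · x) atTop (𝓝 (codeRate a K w)) := by
  have hshift (r : ℕ) :=
    (tendsto_birkhoffAverage_comp (isBounded_range_zeroInd r) (hx r)).sub (hx (r + 1))
  simp only [← birkhoffAverage_sub, ← Pi.sub_apply] at hshift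
  refine ((tendsto_birkhoffAverage_clm (truncMean K _) hshift).add
    (tendsto_birkhoffAverage_clm (truncMean K _) fun r => hx (r + 1))).congr fun n => ?_
  rw [← Pi.add_apply, ← Pi.add_apply, ← birkhoffAverage_add]
  congr 2
  exact funext fun y => (codeLength_eq_truncMean_add K w y).symm

theorem bowenEntropy_zeroFreqSet_le_of_codeRate_lt {a : ℕ → ℝ} {t : ℝ}
    (hw : ∀ r, w r ∈ Ioo 0 1) (ht : codeRate a K w < t) :
    bowenEntropy shift (zeroFreqSet a) ≤ ENNReal.ofReal t := by
  refine bowenEntropy_shift_le_of_birkhoffSum_le (g := codeLength K w)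
    (fun _ _ h => codeLength_congr h) (fun y => (exp_neg_codeLength_add hw y).le)
    fun x hx => Eventually.frequently ?_
  filter_upwards [(tendsto_birkhoffAverage_codeLength hx K w).eventually_lt_const ht,
    eventually_gt_atTop 0] with n hn hn0
  rw [birkhoffAverage, smul_eq_mul, inv_mul_lt_iff₀ (Nat.cast_pos.2 hn0)] at hn
  exact hn.le

end CodeLength

section ConvexSequences

/-- The second difference `a j - 2 a (j + 1) + a (j + 2)`. -/
def secondDiff (a : ℕ → ℝ) (j : ℕ) : ℝ := a j - 2 * a (j + 1) + a (j + 2)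

/-- Olivier's theorem. -/
lemma tendsto_mul_of_antitone_of_summable {b : ℕ → ℝ} (hb : Antitone b) (hsum : Summable b) :
    Tendsto (fun n : ℕ => n * b n) atTop (𝓝 0) := by
  have hb0 (n : ℕ) : 0 ≤ b n := hb.le_of_tendsto hsum.tendsto_atTop_zero n
  let s (n : ℕ) : ℝ := ∑ i ∈ Finset.range n, b i
  have hs : Tendsto s atTop (𝓝 (∑' i, b i)) := hsum.hasSum.tendsto_sum_nat
  have hhalf : Tendsto (fun n : ℕ => n / 2) atTop atTop :=
    Nat.tendsto_div_const_atTop two_ne_zero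
  have hlim : Tendsto (fun n => 2 * (s n - s (n / 2))) atTop (𝓝 0) := by
    simpa using (hs.sub (hs.comp hhalf)).const_mul 2
  refine squeeze_zero (fun n => mul_nonneg n.cast_nonneg (hb0 n)) (fun n => ?_) hlim
  have hblock : ((n - n / 2 : ℕ) : ℝ) * b n ≤ s n - s (n / 2) := by
    rw [← Finset.sum_Ico_eq_sub _ (Nat.div_le_self n 2), ← nsmul_eq_mul, ← Nat.card_Ico]
    exact Finset.card_nsmul_le_sum _ _ _ fun i hi => hb (Finset.mem_Ico.1 hi).2.le
  have hn : (n : ℝ) ≤ 2 * ((n - n / 2 : ℕ) : ℝ) := by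
    exact_mod_cast (by omega : n ≤ 2 * (n - n / 2))
  linarith [mul_le_mul_of_nonneg_right hn (hb0 n)]

lemma hasSum_sub_succ_of_antitone {b : ℕ → ℝ} {l : ℝ} (hb : Antitone b)
    (hl : Tendsto b atTop (𝓝 l)) : HasSum (fun n => b n - b (n + 1)) (b 0 - l) := by
  rw [hasSum_iff_tendsto_nat_of_nonneg fun n => sub_nonneg.2 (hb n.le_succ)]
  simpa only [Finset.sum_range_sub'] using hl.const_sub (b 0)

variable {a : ℕ → ℝ} {L : ℝ}

lemma antitone_sub_succ (hconv : ∀ j, 0 ≤ secondDiff a j) : Antitone fun n => a n - a (n + 1) :=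
  antitone_nat_of_succ_le fun n => by have := hconv n; unfold secondDiff at this; linarith

lemma tendsto_sub_succ (hL : Tendsto a atTop (𝓝 L)) :
    Tendsto (fun n => a n - a (n + 1)) atTop (𝓝 0) := by
  simpa using hL.sub ((tendsto_add_atTop_iff_nat 1).2 hL)

lemma hasSum_secondDiff (hL : Tendsto a atTop (𝓝 L)) (hconv : ∀ j, 0 ≤ secondDiff a j) :
    HasSum (secondDiff a) (a 0 - a 1) := by
  have h := hasSum_sub_succ_of_antitone (antitone_sub_succ hconv) (tendsto_sub_succ hL)
  rw [sub_zero] at h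
  exact h.congr_fun fun j => by rw [secondDiff]; ring

lemma sum_range_succ_mul_secondDiff (a : ℕ → ℝ) (n : ℕ) :
    ∑ j ∈ Finset.range n, ((j : ℝ) + 1) * secondDiff a j =
      a 0 - a n - n * (a n - a (n + 1)) := by
  induction n with
  | zero => simp
  | succ n ih => rw [Finset.sum_range_succ, ih, secondDiff]; push_cast; ring

lemma hasSum_succ_mul_secondDiff (hL : Tendsto a atTop (𝓝 L)) (hmono : Antitone a)
    (hconv : ∀ j, 0 ≤ secondDiff a j) :
    HasSum (fun j : ℕ => ((j : ℝ) + 1) * secondDiff a j) (a 0 - L) := by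
  rw [hasSum_iff_tendsto_nat_of_nonneg fun j => mul_nonneg (by positivity) (hconv j)]
  simp only [sum_range_succ_mul_secondDiff]
  simpa using (hL.const_sub (a 0)).sub (tendsto_mul_of_antitone_of_summable
    (antitone_sub_succ hconv) (hasSum_sub_succ_of_antitone hmono hL).summable)

lemma hasSum_truncated_mul_secondDiff (hL : Tendsto a atTop (𝓝 L)) (hmono : Antitone a)
    (hconv : ∀ j, 0 ≤ secondDiff a j) (k : ℕ) :
    HasSum (fun j : ℕ => ((j + 1 - k : ℕ) : ℝ) * secondDiff a j) (a k - L) := by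
  have hshift (j : ℕ) : secondDiff (fun i => a (i + k)) j = secondDiff a (j + k) := by
    simp only [secondDiff, add_right_comm]
  have h := hasSum_succ_mul_secondDiff (a := fun i => a (i + k))
    ((tendsto_add_atTop_iff_nat k).2 hL) (fun i j hij => hmono (by gcongr))
    fun j => (hshift j).symm ▸ hconv (j + k)
  simp only [hshift, zero_add] at h
  rw [← hasSum_nat_add_iff' k, Finset.sum_eq_zero, sub_zero]
  · exact h.congr_fun fun j => by simp [show j + k + 1 - k = j + 1 by omega]
  · intro j hj
    simp [Nat.sub_eq_zero_of_le (Nat.succ_le_of_lt (Finset.mem_range.1 hj))]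

/-- Gibbs' inequality against the weights `exp (-j)`. -/
lemma summable_negMulLog_of_summable_mul {p : ℕ → ℝ} (hp0 : ∀ j, 0 ≤ p j) (hp1 : ∀ j, p j ≤ 1)
    (hp : Summable fun j : ℕ => (j : ℝ) * p j) : Summable fun j => Real.negMulLog (p j) := by
  refine Summable.of_nonneg_of_le (fun j => Real.negMulLog_nonneg (hp0 j) (hp1 j)) (fun j => ?_)
    (Real.summable_exp_neg_nat.add hp)
  rcases (hp0 j).eq_or_lt with h | h
  · simp [← h, Real.exp_nonneg]
  · have hlog := Real.log_le_sub_one_of_pos (div_pos (Real.exp_pos (-(j : ℝ))) h)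
    rw [Real.log_div (Real.exp_pos _).ne' h.ne', Real.log_exp, le_sub_iff_add_le,
      le_div_iff₀ h] at hlog
    rw [Real.negMulLog]
    linarith

end ConvexSequences

section UpperBound

lemma exists_mem_Ioo_mul_neg_log_lt (p : ℝ) {δ : ℝ} (hδ : 0 < δ) :
    ∃ c ∈ Ioo (0 : ℝ) 1, p * -Real.log c < δ := by
  have hcont : ContinuousAt (fun c => p * -Real.log c) 1 :=
    (Real.continuousAt_log one_ne_zero).neg.const_mul p
  have hlim : ∀ᶠ c in 𝓝[<] (1 : ℝ), p * -Real.log c < δ :=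
    (hcont.eventually_lt continuousAt_const (by simpa)).filter_mono nhdsWithin_le_nhds
  exact (Filter.Eventually.and (Ioo_mem_nhdsLT one_pos) hlim).exists

lemma exists_codeWeight {p q δ : ℝ} (hp : 0 ≤ p) (hq : 0 ≤ q) (hδ : 0 < δ) :
    ∃ c ∈ Ioo (0 : ℝ) 1, -Real.log c * p + -Real.log (1 - c) * q ≤
      Real.negMulLog p + Real.negMulLog q - Real.negMulLog (p + q) + δ := by
  rcases hp.eq_or_lt with rfl | hp
  · obtain ⟨c, hc, h⟩ := exists_mem_Ioo_mul_neg_log_lt q hδ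
    exact ⟨1 - c, ⟨sub_pos.2 hc.2, sub_lt_self 1 hc.1⟩, by simpa [mul_comm] using h.le⟩
  rcases hq.eq_or_lt with rfl | hq
  · obtain ⟨c, hc, h⟩ := exists_mem_Ioo_mul_neg_log_lt p hδ
    exact ⟨c, hc, by simpa [mul_comm] using h.le⟩
  have hpq : 0 < p + q := add_pos hp hq
  refine ⟨p / (p + q), ⟨div_pos hp hpq, (div_lt_one hpq).2 (lt_add_of_pos_right p hq)⟩, ?_⟩
  rw [one_sub_div hpq.ne', add_sub_cancel_left, Real.log_div hp.ne' hpq.ne',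
    Real.log_div hq.ne' hpq.ne']
  simp only [Real.negMulLog]
  linarith

variable {a : ℕ → ℝ}

/-- The value of the entropy of `zeroFreqSet a`, with `a 0` in place of `1`. -/
noncomputable def zeroFreqEntropy (a : ℕ → ℝ) : ℝ :=
  -Real.negMulLog (a 0 - a 1) + ∑' j, Real.negMulLog (secondDiff a j)

lemma exists_codeRate_le (hpos : ∀ n, 0 ≤ a n) (hmono : Antitone a)
    (hconv : ∀ j, 0 ≤ secondDiff a j) (K : ℕ) {δ : ℝ} (hδ : 0 < δ) :
    ∃ w : ℕ → ℝ, (∀ r, w r ∈ Ioo 0 1) ∧ codeRate a K w ≤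
      -Real.negMulLog (a 0 - a 1) + ∑ r ∈ Finset.range K, Real.negMulLog (secondDiff a r) +
        2 * Real.negMulLog (a K - a (K + 1)) +
        (Real.negMulLog (a (K + 1)) - Real.negMulLog (a K)) + δ := by
  have hd (r : ℕ) : 0 ≤ a r - a (r + 1) := sub_nonneg.2 (hmono r.le_succ)
  have hδK : 0 < δ / (K + 1) := by positivity
  choose v hv hvle using fun r => exists_codeWeight (hconv r) (hd (r + 1)) hδK
  obtain ⟨c, hc, hcle⟩ := exists_codeWeight (hd K) (hpos (K + 1)) hδK
  have hlast : a K - a (K + 1) + a (K + 1) = a K := sub_add_cancel _ _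
  have hsplit (r : ℕ) : secondDiff a r + (a (r + 1) - a (r + 2)) = a r - a (r + 1) := by
    rw [secondDiff]; ring
  have hwv : ∀ r ∈ Finset.range K, (if r < K then v r else c) = v r := fun r hr =>
    if_pos (Finset.mem_range.1 hr)
  refine ⟨fun r => if r < K then v r else c, fun r => ite_mem.2 ⟨fun _ => hv r, fun _ => hc⟩, ?_⟩
  calc codeRate a K (fun r => if r < K then v r else c)
      = ∑ r ∈ Finset.range K, (-Real.log (v r) * secondDiff a r +
            -Real.log (1 - v r) * (a (r + 1) - a (r + 2))) +
          (-Real.log c * (a K - a (K + 1)) + -Real.log (1 - c) * a (K + 1)) := by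
        rw [codeRate, truncMean_apply, truncMean_apply, Finset.sum_add_distrib, add_add_add_comm]
        congr 2
        · exact Finset.sum_congr rfl fun r hr => by rw [hwv r hr, secondDiff]; ring
        · exact Finset.sum_congr rfl fun r hr => by rw [hwv r hr]
        all_goals rw [if_neg (lt_irrefl K)]
    _ ≤ ∑ r ∈ Finset.range K, (Real.negMulLog (secondDiff a r) +
            (Real.negMulLog (a (r + 1) - a (r + 2)) - Real.negMulLog (a r - a (r + 1))) +
            δ / (K + 1)) +
          (Real.negMulLog (a K - a (K + 1)) + Real.negMulLog (a (K + 1)) -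
            Real.negMulLog (a K) + δ / (K + 1)) := by
        refine add_le_add (Finset.sum_le_sum fun r _ => ?_) (by rwa [hlast] at hcle)
        linarith [hsplit r ▸ hvle r]
    _ = _ := by
        rw [Finset.sum_add_distrib, Finset.sum_add_distrib,
          Finset.sum_range_sub fun r => Real.negMulLog (a r - a (r + 1)), Finset.sum_const,
          Finset.card_range, nsmul_eq_mul]
        field_simp
        ring

theorem bowenEntropy_zeroFreqSet_le (hpos : ∀ n, 0 ≤ a n) (hmono : Antitone a)
    (hconv : ∀ j, 0 ≤ secondDiff a j) (hsum : Summable fun j => Real.negMulLog (secondDiff a j)) :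
    bowenEntropy shift (zeroFreqSet a) ≤ ENNReal.ofReal (zeroFreqEntropy a) := by
  obtain ⟨L, hL⟩ : ∃ L, Tendsto a atTop (𝓝 L) :=
    ⟨_, tendsto_atTop_ciInf hmono ⟨0, forall_mem_range.2 hpos⟩⟩
  let u (K : ℕ) : ℝ :=
    -Real.negMulLog (a 0 - a 1) + ∑ r ∈ Finset.range K, Real.negMulLog (secondDiff a r) +
      2 * Real.negMulLog (a K - a (K + 1)) +
      (Real.negMulLog (a (K + 1)) - Real.negMulLog (a K))
  have hu : Tendsto u atTop (𝓝 (zeroFreqEntropy a)) := by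
    have hlog (b : ℕ → ℝ) (l : ℝ) (h : Tendsto b atTop (𝓝 l)) :=
      (Real.continuous_negMulLog.tendsto l).comp h
    simpa [zeroFreqEntropy] using
      ((hsum.hasSum.tendsto_sum_nat.const_add (-Real.negMulLog (a 0 - a 1))).add
        ((hlog _ _ (tendsto_sub_succ hL)).const_mul 2)).add
        ((hlog _ _ ((tendsto_add_atTop_iff_nat 1).2 hL)).sub (hlog _ _ hL))
  have hlt (t : ℝ) (ht : zeroFreqEntropy a < t) :
      bowenEntropy shift (zeroFreqSet a) ≤ ENNReal.ofReal t := by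
    obtain ⟨K, hK⟩ := (hu.eventually_lt_const ht).exists
    obtain ⟨w, hw, hle⟩ := exists_codeRate_le hpos hmono hconv K (half_pos (sub_pos.2 hK))
    exact bowenEntropy_zeroFreqSet_le_of_codeRate_lt hw (hle.trans_lt (by linarith))
  exact ge_of_tendsto (ENNReal.continuous_ofReal.tendsto _ |>.mono_left nhdsWithin_le_nhds)
    (eventually_mem_nhdsWithin.mono hlt : ∀ᶠ t in 𝓝[>] _, _)

end UpperBound

section MarkedSequences

open Classical in
/-- The sequence whose ones are at the positions `S 1 - 1`, `S 2 - 1`, …, so that for a strictly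
monotone `S` with `S 0 = 0` its `n`-th block `0⋯01` occupies the interval `[S n, S (n + 1))`. -/
noncomputable def markSeq (S : ℕ → ℕ) (m : ℕ) : Bool := decide (∃ n, S (n + 1) = m + 1)

variable {S S' : ℕ → ℕ}

lemma markSeq_eq_true {m : ℕ} : markSeq S m = true ↔ ∃ n, S (n + 1) = m + 1 := by
  simp [markSeq]

lemma zeroInd_shift_markSeq (hS : StrictMono S) {k n j : ℕ}
    (hj : j ∈ Finset.Ico (S n) (S (n + 1))) :
    zeroInd k (shift^[j] (markSeq S)) = if j + k < S (n + 1) then 1 else 0 := by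
  obtain ⟨hnj, hjn⟩ := Finset.mem_Ico.1 hj
  rw [zeroInd_eq]
  congr 1
  refine propext ⟨fun h => ?_, fun h i hi => ?_⟩
  · by_contra hc
    have htrue : markSeq S (S (n + 1) - 1) = true := markSeq_eq_true.2 ⟨n, by omega⟩
    have hfalse := h (S (n + 1) - 1 - j) (by omega)
    rw [shift_iterate_apply, Nat.sub_add_cancel (by omega), htrue] at hfalse
    exact Bool.noConfusion hfalse
  · rw [shift_iterate_apply, ← Bool.not_eq_true, markSeq_eq_true]
    rintro ⟨p, hp⟩
    have hnp : n < p + 1 := hS.lt_iff_lt.1 (by omega)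
    have hpn : p + 1 < n + 1 := hS.lt_iff_lt.1 (by omega)
    omega

lemma birkhoffSum_zeroInd_markSeq (hS : StrictMono S) (hS0 : S 0 = 0) (k n : ℕ) :
    birkhoffSum shift (zeroInd k) (S n) (markSeq S) =
      ∑ i ∈ Finset.range n, ((S (i + 1) - S i - k : ℕ) : ℝ) := by
  induction n with
  | zero => simp [hS0]
  | succ n ih =>
    have hfilter : (Finset.Ico (S n) (S (n + 1))).filter (fun j => j + k < S (n + 1)) =
        Finset.Ico (S n) (S (n + 1) - k) := by
      ext j
      simp only [Finset.mem_filter, Finset.mem_Ico]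
      omega
    rw [Finset.sum_range_succ, ← ih, birkhoffSum, birkhoffSum,
      ← Finset.sum_range_add_sum_Ico _ (hS n.lt_add_one).le,
      Finset.sum_congr rfl fun j => zeroInd_shift_markSeq hS, Finset.sum_boole, hfilter,
      Nat.card_Ico, Nat.sub_right_comm]

lemma tendsto_succ_div {u : ℕ → ℝ} {σ : ℝ} (hu : Tendsto (fun n : ℕ => u n / n) atTop (𝓝 σ)) :
    Tendsto (fun n : ℕ => u (n + 1) / n) atTop (𝓝 σ) := by
  have h := ((tendsto_add_atTop_iff_nat 1).2 hu).mul
    ((tendsto_const_div_atTop_nhds_zero_nat (1 : ℝ)).const_add 1)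
  rw [add_zero, mul_one] at h
  refine h.congr' ?_
  filter_upwards [eventually_ne_atTop 0] with n hn
  have hn' : (n : ℝ) + 1 ≠ 0 := n.cast_add_one_ne_zero
  push_cast
  field_simp

lemma tendsto_birkhoffAverage_zeroInd_markSeq (hS : StrictMono S) (hS0 : S 0 = 0) {σ f : ℝ}
    (hσ : 0 < σ) (hSσ : Tendsto (fun n : ℕ => (S n : ℝ) / n) atTop (𝓝 σ)) {k : ℕ}
    (hf : Tendsto (fun n : ℕ => (∑ i ∈ Finset.range n, ((S (i + 1) - S i - k : ℕ) : ℝ)) / n) atTop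
      (𝓝 f)) :
    Tendsto (birkhoffAverage ℝ shift (zeroInd k) · (markSeq S)) atTop (𝓝 (f / σ)) := by
  let u (n : ℕ) : ℝ := birkhoffSum shift (zeroInd k) n (markSeq S)
  have hu : Monotone u := monotone_nat_of_le_succ fun n =>
    (le_add_of_nonneg_right (zeroInd_nonneg _ _)).trans_eq (birkhoffSum_succ _ _ _ _).symm
  have hratio (v : ℕ → ℝ) (c : ℝ) (hv : Tendsto (fun n : ℕ => v n / n) atTop (𝓝 c)) :
      Tendsto (fun n => v n / S n) atTop (𝓝 (c / σ)) := by
    refine (hv.div hSσ hσ.ne').congr' ?_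
    filter_upwards [eventually_ne_atTop 0] with n hn
    exact div_div_div_cancel_right₀ (Nat.cast_ne_zero.2 hn) _ _
  have hnext := hratio _ _ (tendsto_succ_div hSσ)
  rw [div_self hσ.ne'] at hnext
  refine (tendsto_div_of_monotone_of_exists_subseq_tendsto_div u _ hu fun b hb =>
    ⟨S, ?_, hS.tendsto_atTop, ?_⟩).congr fun n => ?_
  · filter_upwards [hnext.eventually_lt_const hb, eventually_gt_atTop 0] with n hn hn0
    exact ((div_lt_iff₀ (Nat.cast_pos.2 (hS0.symm.trans_lt (hS hn0)))).1 hn).le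
  · simpa only [u, birkhoffSum_zeroInd_markSeq hS hS0] using hratio _ _ hf
  · rw [birkhoffAverage, smul_eq_mul, inv_mul_eq_div]

lemma le_of_markSeq_eq (hS : StrictMono S) (hS' : StrictMono S') {i : ℕ} (hi : S' i = S i)
    (h : markSeq S' (S (i + 1) - 1) = markSeq S (S (i + 1) - 1)) : S' (i + 1) ≤ S (i + 1) := by
  have hlt := hS i.lt_add_one
  obtain ⟨p, hp⟩ := markSeq_eq_true.1 (h.trans (markSeq_eq_true.2 ⟨i, by omega⟩))
  have hip : i < p + 1 := hS'.lt_iff_lt.1 (by omega)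
  have := hS'.monotone (show i + 1 ≤ p + 1 from hip)
  omega

lemma eq_of_markSeq_eq (hS : StrictMono S) (hS' : StrictMono S') (h0 : S' 0 = S 0) {n : ℕ}
    (h : ∀ m < S n, markSeq S' m = markSeq S m) : ∀ i ≤ n, S' i = S i
  | 0, _ => h0
  | i + 1, hi => by
    have ih := eq_of_markSeq_eq hS hS' h0 h i (by omega)
    have hlt := hS i.lt_add_one
    have hlt' := hS' i.lt_add_one
    have hle := hS.monotone hi
    have hle' := le_of_markSeq_eq hS hS' ih (h _ (by omega))
    exact hle'.antisymm (le_of_markSeq_eq hS' hS ih.symm (h _ (by omega)).symm)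

lemma eventually_exists_block (hS : StrictMono S) {I : ℕ → ℝ} {κ σ s : ℝ} (hs : 0 ≤ s)
    (hsκ : s * σ < κ) (hI : Tendsto (fun n : ℕ => I n / n) atTop (𝓝 κ))
    (hSσ : Tendsto (fun n : ℕ => (S n : ℝ) / n) atTop (𝓝 σ)) :
    ∀ᶠ m : ℕ in atTop, ∃ n, S n ≤ m ∧ s * m ≤ I n := by
  obtain ⟨N, hN⟩ := eventually_atTop.1
    ((((tendsto_succ_div hSσ).const_mul s).eventually_lt hI hsκ).and (eventually_gt_atTop 0))
  filter_upwards [eventually_ge_atTop (S N)] with m hm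
  obtain ⟨n, hn, hmn⟩ := hS.exists_between_of_tendsto_atTop hS.tendsto_atTop
    (Nat.lt_succ_of_le ((hS.monotone N.zero_le).trans hm))
  have hNn : N ≤ n := Nat.lt_succ_iff.1 (hS.lt_iff_lt.1 (hm.trans_lt hmn))
  obtain ⟨hlt, hn0⟩ := hN n hNn
  rw [mul_div_assoc', div_lt_div_iff_of_pos_right (Nat.cast_pos.2 hn0)] at hlt
  exact ⟨n, Nat.le_of_lt_succ hn,
    (mul_le_mul_of_nonneg_left (Nat.cast_le.2 (Nat.le_of_lt hmn)) hs).trans hlt.le⟩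

end MarkedSequences

section SparsePadding

/-- `D n` is the total length of the additional blocks of zeros inserted before the `n`-th mark:
they have average length `l`, but only a vanishing proportion of them is nonempty. -/
structure IsSparsePadding (D : ℕ → ℕ) (l : ℝ) : Prop where
  monotone : Monotone D
  map_zero : D 0 = 0
  tendsto_div : Tendsto (fun n : ℕ => (D n : ℝ) / n) atTop (𝓝 l)
  tendsto_card_div : Tendsto (fun n : ℕ =>
    (((Finset.range n).filter fun i => D (i + 1) ≠ D i).card : ℝ) / n) atTop (𝓝 0)

lemma tendsto_natSqrt_sq_div : Tendsto (fun n : ℕ => (Nat.sqrt n : ℝ) ^ 2 / n) atTop (𝓝 1) := by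
  have h := ((tendsto_nat_floor_div_atTop (R := ℝ)).comp
    (Real.tendsto_sqrt_atTop.comp tendsto_natCast_atTop_atTop)).pow 2
  simpa [Function.comp_def, Real.nat_floor_real_sqrt_eq_nat_sqrt, div_pow] using h

lemma tendsto_natSqrt_atTop : Tendsto Nat.sqrt atTop atTop :=
  tendsto_atTop.2 fun b => (eventually_ge_atTop (b * b)).mono fun _ => Nat.le_sqrt.2

lemma tendsto_natSqrt_div : Tendsto (fun n : ℕ => (Nat.sqrt n : ℝ) / n) atTop (𝓝 0) := by
  have h := tendsto_natSqrt_sq_div.mul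
    (tendsto_inv_atTop_zero.comp (tendsto_natCast_atTop_atTop.comp tendsto_natSqrt_atTop))
  rw [mul_zero] at h
  refine h.congr fun n => ?_
  rcases eq_or_ne (n.sqrt : ℝ) 0 with h0 | h0
  · simp [h0]
  · simp only [Function.comp_apply]
    field_simp

lemma card_filter_succ_ne_le_natSqrt (D : ℕ → ℕ) (n : ℕ) :
    ((Finset.range n).filter fun i => D (Nat.sqrt (i + 1)) ≠ D (Nat.sqrt i)).card ≤
      Nat.sqrt n := by
  have hmono : Monotone Nat.sqrt := fun _ _ => Nat.sqrt_le_sqrt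
  rw [← Nat.sub_zero (Nat.sqrt n), ← Nat.sqrt_zero, ← Finset.sum_range_tsub hmono,
    Finset.card_filter]
  refine Finset.sum_le_sum fun i _ => ?_
  split_ifs with h
  · exact Nat.sub_pos_of_lt ((hmono i.le_succ).lt_of_ne' fun he => h (congrArg D he))
  · exact Nat.zero_le _

lemma exists_isSparsePadding {l : ℝ} (hl : 0 ≤ l) : ∃ D, IsSparsePadding D l := by
  refine ⟨fun n => ⌊l * (Nat.sqrt n : ℝ) ^ 2⌋₊, fun m n h => ?_, by simp, ?_, ?_⟩
  · have := Nat.sqrt_le_sqrt h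
    gcongr
  · have h := ((tendsto_nat_floor_mul_div_atTop hl).comp
      ((tendsto_pow_atTop two_ne_zero).comp
        (tendsto_natCast_atTop_atTop.comp tendsto_natSqrt_atTop))).mul tendsto_natSqrt_sq_div
    rw [mul_one] at h
    refine h.congr' ?_
    filter_upwards [tendsto_natSqrt_atTop.eventually_ne_atTop 0] with n hn
    exact div_mul_div_cancel₀ (pow_ne_zero 2 (Nat.cast_ne_zero.2 hn))
  · refine squeeze_zero (fun n => by positivity) (fun n => ?_) tendsto_natSqrt_div
    gcongr
    exact card_filter_succ_ne_le_natSqrt (fun r => ⌊l * (r : ℝ) ^ 2⌋₊) n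

/-- The end of the `n`-th block when the blocks have lengths `ω i + 1`, up to the padding `D`. -/
def markPos (D ω : ℕ → ℕ) (n : ℕ) : ℕ := ∑ i ∈ Finset.range n, (ω i + 1) + D n

namespace IsSparsePadding

variable {D : ℕ → ℕ} {l m : ℝ}

lemma markPos_zero (hD : IsSparsePadding D l) (ω : ℕ → ℕ) : markPos D ω 0 = 0 := by
  simp [markPos, hD.map_zero]

lemma markPos_succ_sub (hD : IsSparsePadding D l) (ω : ℕ → ℕ) (n : ℕ) :
    markPos D ω (n + 1) - markPos D ω n = ω n + 1 + (D (n + 1) - D n) := by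
  have := hD.monotone (Nat.le_add_right n 1)
  rw [markPos, markPos, Finset.sum_range_succ]
  omega

lemma strictMono_markPos (hD : IsSparsePadding D l) (ω : ℕ → ℕ) : StrictMono (markPos D ω) :=
  strictMono_nat_of_lt_succ fun n => by have := hD.markPos_succ_sub ω n; omega

lemma sum_gap_sub_le (hD : IsSparsePadding D l) (ω : ℕ → ℕ) (k n : ℕ) :
    ∑ i ∈ Finset.range n, (markPos D ω (i + 1) - markPos D ω i - k) ≤
      ∑ i ∈ Finset.range n, (ω i + 1 - k) + D n := by
  rw [← Nat.sub_zero (D n), ← hD.map_zero, ← Finset.sum_range_tsub hD.monotone,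
    ← Finset.sum_add_distrib]
  refine Finset.sum_le_sum fun i _ => ?_
  rw [hD.markPos_succ_sub]
  omega

lemma le_sum_gap_sub (hD : IsSparsePadding D l) (ω : ℕ → ℕ) (k n : ℕ) :
    ∑ i ∈ Finset.range n, (ω i + 1 - k) + D n ≤
      ∑ i ∈ Finset.range n, (markPos D ω (i + 1) - markPos D ω i - k) +
        k * ((Finset.range n).filter fun i => D (i + 1) ≠ D i).card := by
  rw [← Nat.sub_zero (D n), ← hD.map_zero, ← Finset.sum_range_tsub hD.monotone,
    Finset.card_filter, Finset.mul_sum, ← Finset.sum_add_distrib, ← Finset.sum_add_distrib]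
  refine Finset.sum_le_sum fun i _ => ?_
  rw [hD.markPos_succ_sub]
  split_ifs <;> omega

lemma tendsto_sum_gap_sub_div (hD : IsSparsePadding D l) {ω : ℕ → ℕ} {k : ℕ}
    (h : Tendsto (fun n : ℕ => (∑ i ∈ Finset.range n, ((ω i + 1 - k : ℕ) : ℝ)) / n) atTop (𝓝 m)) :
    Tendsto (fun n : ℕ => (∑ i ∈ Finset.range n,
      ((markPos D ω (i + 1) - markPos D ω i - k : ℕ) : ℝ)) / n) atTop (𝓝 (m + l)) := by
  have hup := h.add hD.tendsto_div
  have hlow := hup.sub (hD.tendsto_card_div.const_mul (k : ℝ))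
  rw [mul_zero, sub_zero] at hlow
  refine tendsto_of_tendsto_of_tendsto_of_le_of_le hlow hup (fun n => ?_) fun n => ?_
  · rw [← add_div, mul_div_assoc', ← sub_div]
    gcongr
    exact sub_le_iff_le_add.2 (mod_cast hD.le_sum_gap_sub ω k n)
  · rw [← add_div]
    gcongr
    exact mod_cast hD.sum_gap_sub_le ω k n

lemma tendsto_markPos_div (hD : IsSparsePadding D l) {ω : ℕ → ℕ}
    (h : Tendsto (fun n : ℕ => (∑ i ∈ Finset.range n, ((ω i + 1 : ℕ) : ℝ)) / n) atTop (𝓝 m)) :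
    Tendsto (fun n : ℕ => (markPos D ω n : ℝ) / n) atTop (𝓝 (m + l)) :=
  (h.add hD.tendsto_div).congr fun n => by rw [← add_div, markPos]; push_cast; rfl

lemma eq_of_markSeq_markPos_eq (hD : IsSparsePadding D l) {ω ω' : ℕ → ℕ} {n : ℕ}
    (h : ∀ m < markPos D ω n, markSeq (markPos D ω') m = markSeq (markPos D ω) m) :
    ∀ i < n, ω' i = ω i := fun i hi => by
  have heq := eq_of_markSeq_eq (hD.strictMono_markPos ω) (hD.strictMono_markPos ω')
    ((hD.markPos_zero ω').trans (hD.markPos_zero ω).symm) h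
  have hgap := hD.markPos_succ_sub ω' i
  rw [heq i hi.le, heq (i + 1) hi, hD.markPos_succ_sub] at hgap
  omega

end IsSparsePadding

end SparsePadding

section RenewalProcess

open ProbabilityTheory

lemma ae_tendsto_average_infinitePi {Ω : Type*} [MeasurableSpace Ω] {Q : Measure Ω}
    [IsProbabilityMeasure Q] {f : Ω → ℝ} (hfm : Measurable f) (hf : Integrable f Q) :
    ∀ᵐ ω ∂Measure.infinitePi (fun _ : ℕ => Q),
      Tendsto (fun n : ℕ => (∑ i ∈ Finset.range n, f (ω i)) / n) atTop (𝓝 (∫ j, f j ∂Q)) := by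
  have heval (i : ℕ) := measurePreserving_eval_infinitePi (fun _ : ℕ => Q) i
  have hmap (i : ℕ) : (Measure.infinitePi fun _ : ℕ => Q).map (fun ω => f (ω i)) = Q.map f :=
    (Measure.map_map hfm (measurable_pi_apply i)).symm.trans (by rw [(heval i).map_eq])
  have hident (i : ℕ) : IdentDistrib (fun ω : ℕ → Ω => f (ω i)) (fun ω => f (ω 0))
      (Measure.infinitePi fun _ : ℕ => Q) (Measure.infinitePi fun _ : ℕ => Q) :=
    ⟨(hfm.comp (measurable_pi_apply i)).aemeasurable,
      (hfm.comp (measurable_pi_apply 0)).aemeasurable, by rw [hmap, hmap]⟩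
  have hslln := strong_law_ae_real _ ((heval 0).integrable_comp_of_integrable hf)
    (fun i j hij => (iIndepFun_infinitePi (P := fun _ : ℕ => Q) (X := fun _ => f)
      fun _ => hfm).indepFun hij) hident
  have hmean : ∫ ω : ℕ → Ω, f (ω 0) ∂(Measure.infinitePi fun _ : ℕ => Q) = ∫ j, f j ∂Q := by
    conv_rhs => rw [← (heval 0).map_eq]
    exact (integral_map (measurable_pi_apply 0).aemeasurable hfm.aestronglyMeasurable).symm
  rwa [← hmean]

/-- The Shannon entropy of a probability measure on a countable space. -/
noncomputable def lawEntropy {Ω : Type*} [MeasurableSpace Ω] (Q : Measure Ω) : ℝ :=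
  ∫ j, -Real.log (Q.real {j}) ∂Q

/-- The mean of the truncated difference `(N + 1) - k` for a random variable `N` with law `Q`:
the mean number of visits to `[0^k]` during a block `0^N 1`. -/
noncomputable def meanVisits (Q : Measure ℕ) (k : ℕ) : ℝ := ∫ j, ((j + 1 - k : ℕ) : ℝ) ∂Q

variable {Q : Measure ℕ} [IsProbabilityMeasure Q] {D : ℕ → ℕ} {l : ℝ}

lemma integrable_add_one_sub (hQ : Integrable (fun j : ℕ => (j : ℝ)) Q) (k : ℕ) :
    Integrable (fun j : ℕ => ((j + 1 - k : ℕ) : ℝ)) Q := by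
  refine (hQ.add (integrable_const 1)).mono' measurable_from_top.aestronglyMeasurable
    (Eventually.of_forall fun j => ?_)
  rw [Real.norm_natCast, Pi.add_apply, ← Nat.cast_add_one]
  exact Nat.cast_le.2 (Nat.sub_le (j + 1) k)

lemma meanVisits_zero_pos (hQ : Integrable (fun j : ℕ => (j : ℝ)) Q) : 0 < meanVisits Q 0 := by
  refine one_pos.trans_le ?_
  calc (1 : ℝ) = ∫ _, 1 ∂Q := by simp
    _ ≤ meanVisits Q 0 := integral_mono (integrable_const 1) (integrable_add_one_sub hQ 0)
        fun j => Nat.one_le_cast.2 (Nat.le_add_left 1 j)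

lemma infinitePi_markSeq_eq_le (hD : IsSparsePadding D l) (ω : ℕ → ℕ) (n : ℕ) :
    Measure.infinitePi (fun _ : ℕ => Q)
      {ω' | ∀ i < markPos D ω n, markSeq (markPos D ω') i = markSeq (markPos D ω) i} ≤
    ENNReal.ofReal (Real.exp (-∑ i ∈ Finset.range n, -Real.log (Q.real {ω i}))) := by
  have hsub : {ω' | ∀ i < markPos D ω n, markSeq (markPos D ω') i = markSeq (markPos D ω) i} ⊆
      Set.pi (Finset.range n) fun i => {ω i} := fun ω' h i hi =>
    hD.eq_of_markSeq_markPos_eq h i (Finset.mem_range.1 hi)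
  refine (measure_mono hsub).trans ?_
  rw [Measure.infinitePi_pi _ fun _ _ => MeasurableSet.singleton _, Finset.sum_neg_distrib, neg_neg,
    Real.exp_sum, ENNReal.ofReal_prod_of_nonneg fun _ _ => (Real.exp_pos _).le]
  refine Finset.prod_le_prod' fun i _ => ?_
  rw [← ofReal_measureReal]
  exact ENNReal.ofReal_le_ofReal (Real.le_exp_log _)

lemma eventually_infinitePi_markSeq_eq_le (hD : IsSparsePadding D l) {ω : ℕ → ℕ} {κ σ s : ℝ}
    (hs : 0 ≤ s) (hsκ : s * σ < κ)
    (hκ : Tendsto (fun n : ℕ => (∑ i ∈ Finset.range n, -Real.log (Q.real {ω i})) / n) atTop (𝓝 κ))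
    (hσ : Tendsto (fun n : ℕ => (markPos D ω n : ℝ) / n) atTop (𝓝 σ)) :
    ∀ᶠ m : ℕ in atTop, Measure.infinitePi (fun _ : ℕ => Q)
      {ω' | ∀ i < m, markSeq (markPos D ω') i = markSeq (markPos D ω) i} ≤
        ENNReal.ofReal (Real.exp (-s * m)) := by
  filter_upwards [eventually_exists_block (hD.strictMono_markPos ω) hs hsκ hκ hσ]
    with m ⟨n, hnm, hn⟩
  refine le_trans (measure_mono ?_)
    ((infinitePi_markSeq_eq_le hD ω n).trans (ENNReal.ofReal_le_ofReal (Real.exp_le_exp.2 ?_)))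
  · exact fun ω' h i hi => h i (hi.trans_le hnm)
  · linarith

theorem ofReal_le_bowenEntropy_renewal (hQ : Integrable (fun j : ℕ => (j : ℝ)) Q)
    (hlog : Integrable (fun j => -Real.log (Q.real {j})) Q) (hl : 0 ≤ l) :
    ENNReal.ofReal (lawEntropy Q / (meanVisits Q 0 + l)) ≤
      bowenEntropy shift (zeroFreqSet fun k => (meanVisits Q k + l) / (meanVisits Q 0 + l)) := by
  obtain ⟨D, hD⟩ := exists_isSparsePadding hl
  have hσ : 0 < meanVisits Q 0 + l := add_pos_of_pos_of_nonneg (meanVisits_zero_pos hQ) hl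
  have hlt (s : ℝ) (hs : s < lawEntropy Q / (meanVisits Q 0 + l)) : ENNReal.ofReal s ≤
      bowenEntropy shift (zeroFreqSet fun k => (meanVisits Q k + l) / (meanVisits Q 0 + l)) := by
    rcases le_or_gt s 0 with hs0 | hs0
    · simp [ENNReal.ofReal_of_nonpos hs0]
    refine ofReal_le_bowenEntropy_shift (P := Measure.infinitePi fun _ : ℕ => Q)
      (x := fun ω => markSeq (markPos D ω)) ?_
    filter_upwards [ae_tendsto_average_infinitePi measurable_from_top hlog, ae_all_iff.2 fun k =>
      ae_tendsto_average_infinitePi measurable_from_top (integrable_add_one_sub hQ k)] with ω hκ hm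
    have hmark := hD.tendsto_markPos_div (hm 0)
    exact ⟨fun k => tendsto_birkhoffAverage_zeroInd_markSeq (hD.strictMono_markPos ω)
        (hD.markPos_zero ω) hσ hmark (hD.tendsto_sum_gap_sub_div (hm k)),
      eventually_infinitePi_markSeq_eq_le hD hs0.le ((lt_div_iff₀ hσ).1 hs) hκ hmark⟩
  exact le_of_tendsto (ENNReal.continuous_ofReal.tendsto _ |>.mono_left nhdsWithin_le_nhds)
    (eventually_mem_nhdsWithin.mono hlt : ∀ᶠ s in 𝓝[<] _, _)

end RenewalProcess

section LowerBound

/-- The discrete measure with point masses `q j`; a probability measure when the nonnegative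
weights `q` sum to `1`. Negative weights count as `0`. -/
noncomputable def weightLaw {ι : Type*} [MeasurableSpace ι] (q : ι → ℝ) : Measure ι :=
  Measure.sum fun j => ENNReal.ofReal (q j) • Measure.dirac j

section WeightLaw

variable {ι : Type*} {q f : ι → ℝ} {s : ℝ}

lemma summable_toReal_ofReal_mul_norm (hq : ∀ j, 0 ≤ q j) (hf : HasSum (fun j => f j * q j) s) :
    Summable fun j => (ENNReal.ofReal (q j)).toReal * ‖f j‖ :=
  hf.summable.norm.congr fun j => by
    rw [ENNReal.toReal_ofReal (hq j), norm_mul, Real.norm_of_nonneg (hq j), mul_comm]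

variable [MeasurableSpace ι]

lemma isProbabilityMeasure_weightLaw (hq : ∀ j, 0 ≤ q j) (h1 : HasSum q 1) :
    IsProbabilityMeasure (weightLaw q) :=
  h1.isProbabilityMeasure_sum_dirac hq

variable [MeasurableSingletonClass ι]

lemma measureReal_weightLaw_singleton (hq : ∀ j, 0 ≤ q j) (j : ι) :
    (weightLaw q).real {j} = q j := by
  rw [measureReal_def, weightLaw, Measure.sum_smul_dirac_singleton, ENNReal.toReal_ofReal (hq j)]

variable [Countable ι]

lemma integrable_weightLaw (hq : ∀ j, 0 ≤ q j) (hf : HasSum (fun j => f j * q j) s) :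
    Integrable f (weightLaw q) :=
  integrable_sum_dirac (fun _ => ENNReal.ofReal_ne_top) (summable_toReal_ofReal_mul_norm hq hf)

lemma integral_weightLaw (hq : ∀ j, 0 ≤ q j) (hf : HasSum (fun j => f j * q j) s) :
    ∫ j, f j ∂weightLaw q = s := by
  refine (hasSum_integral_sum_dirac (fun _ => ENNReal.ofReal_ne_top)
    (summable_toReal_ofReal_mul_norm hq hf)).unique (hf.congr_fun fun j => ?_)
  rw [ENNReal.toReal_ofReal (hq j), smul_eq_mul, mul_comm]

end WeightLaw

lemma hasSum_neg_log_div_mul_div {ι : Type*} {p : ι → ℝ} {b : ℝ} (hp : ∀ j, 0 ≤ p j) (hb : 0 < b)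
    (h1 : HasSum p b) (hsum : Summable fun j => Real.negMulLog (p j)) :
    HasSum (fun j => -Real.log (p j / b) * (p j / b))
      ((-Real.negMulLog b + ∑' j, Real.negMulLog (p j)) / b) := by
  have hval : -Real.negMulLog b + ∑' j, Real.negMulLog (p j) =
      (∑' j, Real.negMulLog (p j)) + b * Real.log b := by
    rw [Real.negMulLog]; ring
  rw [hval]
  refine ((hsum.hasSum.add (h1.mul_right (Real.log b))).div_const b).congr_fun fun j => ?_
  rcases (hp j).eq_or_lt with h0 | h0
  · simp [← h0]
  · rw [Real.log_div h0.ne' hb.ne', Real.negMulLog]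
    ring

variable {a : ℕ → ℝ}

theorem ofReal_zeroFreqEntropy_le (ha0 : a 0 = 1) (hpos : ∀ n, 0 ≤ a n) (hmono : Antitone a)
    (hconv : ∀ j, 0 ≤ secondDiff a j) (hsum : Summable fun j => Real.negMulLog (secondDiff a j)) :
    ENNReal.ofReal (zeroFreqEntropy a) ≤ bowenEntropy shift (zeroFreqSet a) := by
  obtain ⟨L, hL⟩ : ∃ L, Tendsto a atTop (𝓝 L) :=
    ⟨_, tendsto_atTop_ciInf hmono ⟨0, forall_mem_range.2 hpos⟩⟩
  have hp := hasSum_secondDiff hL hconv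
  rcases (sub_nonneg.2 (hmono zero_le_one)).eq_or_lt with hb | hb
  · rw [← hb] at hp
    simp [zeroFreqEntropy, ← hb, (hasSum_zero_iff_of_nonneg hconv).1 hp]
  set b := a 0 - a 1
  let q (j : ℕ) : ℝ := secondDiff a j / b
  have hq (j : ℕ) : 0 ≤ q j := div_nonneg (hconv j) hb.le
  have hq1 : HasSum q 1 := div_self hb.ne' ▸ hp.div_const b
  have hgap (k : ℕ) : HasSum (fun j : ℕ => ((j + 1 - k : ℕ) : ℝ) * q j) ((a k - L) / b) := by
    simpa only [q, mul_div_assoc] using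
      (hasSum_truncated_mul_secondDiff hL hmono hconv k).div_const b
  have hlog := hasSum_neg_log_div_mul_div hconv hb hp hsum
  have := isProbabilityMeasure_weightLaw hq hq1
  have hmean (k : ℕ) : meanVisits (weightLaw q) k + L / b = a k / b := by
    rw [meanVisits, integral_weightLaw hq (hgap k), ← add_div, sub_add_cancel]
  have hent : lawEntropy (weightLaw q) = zeroFreqEntropy a / b := by
    simp only [lawEntropy, measureReal_weightLaw_singleton hq]
    exact integral_weightLaw hq hlog
  have h := ofReal_le_bowenEntropy_renewal (Q := weightLaw q) (l := L / b)
    (by simpa using integrable_weightLaw hq (hgap 1))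
    (by simpa only [measureReal_weightLaw_singleton hq] using integrable_weightLaw hq hlog)
    (div_nonneg (ge_of_tendsto' hL hpos) hb.le)
  simpa only [hmean, hent, div_div_div_cancel_right₀ hb.ne', ha0, div_one] using h

end LowerBound

/-- **Theorem 1.4 (second part).** If `1 = a_0 ≥ a_1 ≥ ⋯` and
`a_i - 2a_{i+1} + a_{i+2} ≥ 0` for all `i`, then the Bowen topological entropy of
`R(a; {[0^n]}_{n≥1})` equals `-h(1-a_1) + Σ_{j≥0} h(a_j - 2a_{j+1} + a_{j+2})`, where
`h(x) = -x log x`. -/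
theorem entropy_of_frequency_set (a : ℕ → ℝ) (ha0 : a 0 = 1) (hpos : ∀ n, 0 ≤ a n)
    (hmono : ∀ i : ℕ, a (i + 1) ≤ a i)
    (hconv : ∀ i : ℕ, 0 ≤ a i - 2 * a (i + 1) + a (i + 2)) :
    bowenEntropy shift
        {x : ℕ → Bool | ∀ k : ℕ, 1 ≤ k → hasFreq (List.replicate k false) x (a k)} =
      ENNReal.ofReal (-(Real.negMulLog (1 - a 1)) +
        ∑' j : ℕ, Real.negMulLog (a j - 2 * a (j + 1) + a (j + 2))) := by
  have hmono' : Antitone a := antitone_nat_of_succ_le hmono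
  have hL := tendsto_atTop_ciInf hmono' ⟨0, forall_mem_range.2 hpos⟩
  have hp1 (j : ℕ) : secondDiff a j ≤ 1 :=
    (le_hasSum (hasSum_secondDiff hL hconv) j fun i _ => hconv i).trans (by linarith [hpos 1])
  have hsum : Summable fun j => Real.negMulLog (secondDiff a j) :=
    summable_negMulLog_of_summable_mul hconv hp1 <| by
      simpa using (hasSum_truncated_mul_secondDiff hL hmono' hconv 1).summable
  have hvalue : -Real.negMulLog (1 - a 1) +
      ∑' j : ℕ, Real.negMulLog (a j - 2 * a (j + 1) + a (j + 2)) = zeroFreqEntropy a := by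
    rw [zeroFreqEntropy, ha0]; rfl
  rw [setOf_hasFreq_eq_zeroFreqSet ha0, hvalue]
  exact le_antisymm (bowenEntropy_zeroFreqSet_le hpos hmono' hconv hsum)
    (ofReal_zeroFreqEntropy_le ha0 hpos hmono' hconv hsum)
end

section
/- Let (X,T) be a dynamical system satisfying the specification property, let (Φ_i)_{i≥1} be a sequence of continuous functions dense in the unit ball of C(X), let (p_i)_{i≥1} be positive numbers with Σ p_i = 1, let μ be a T-invariant Borel probability measure and α = (α_i)_{i≥1} with α_i = ∫ Φ_i dμ. Then the Bowen topological entropy of the set G_μ of μ-generic points satisfies h_top(G_μ) ≥ Λ_Φ(α). -/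
open MeasureTheory Filter Topology Set
open scoped ENNReal NNReal

/-!  General definitions: Bowen topological entropy (via covers by Bowen balls),
measure-theoretic (Kolmogorov–Sinai) entropy, generic points, saturated systems,
and the specification property. -/

variable {X : Type*}

/-- The Birkhoff average `A_n f(x) = (1/n) Σ_{j<n} f(T^j x)` of a real function. -/
noncomputable def birkhoffAvgR {X : Type*} (T : X → X) (f : X → ℝ) (n : ℕ) (x : X) : ℝ :=
  (∑ j ∈ Finset.range n, f (T^[j] x)) / (n : ℝ)

/-- The approximate level set `X_Φ(α,δ,n) = {x : Σ_i p_i |A_nΦ_i(x) - α_i| < δ}`. -/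
def levelSet {X : Type*} (T : X → X) (Φ : ℕ → X → ℝ) (p α : ℕ → ℝ) (δ : ℝ) (n : ℕ) :
    Set X :=
  {x | (∑' i : ℕ, p i * |birkhoffAvgR T (Φ i) n x - α i|) < δ}

/-- `N(S,n,ε)`: the minimal number of Bowen balls `B_n(x,ε)` needed to cover `S`. -/
noncomputable def coverNum {X : Type*} [PseudoMetricSpace X] (T : X → X) (S : Set X)
    (n : ℕ) (ε : ℝ) : ℕ :=
  sInf {m : ℕ | ∃ F : Finset X, F.card = m ∧ S ⊆ ⋃ x ∈ F, bowenBall T x n ε}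

/-- `Λ_Φ(α) = lim_{ε→0} lim_{δ→0} limsup_n (1/n) log N(α,δ,n,ε)`; the limit in `ε` is an
increasing limit (a supremum) and the limit in `δ` is a decreasing limit (an infimum). -/
noncomputable def LambdaPhi {X : Type*} [PseudoMetricSpace X] (T : X → X)
    (Φ : ℕ → X → ℝ) (p α : ℕ → ℝ) : ℝ≥0∞ :=
  ⨆ (ε : ℝ) (_ : 0 < ε), ⨅ (δ : ℝ) (_ : 0 < δ),
    Filter.atTop.limsup fun n : ℕ =>
      ENNReal.ofReal (Real.log (coverNum T (levelSet T Φ p α δ n) n ε) / (n : ℝ))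

/-!
A separated set of points of `X_Φ(α, δ, n)`, of cardinality at least `exp (s n)`, exists for every
`δ > 0` and infinitely many `n` as soon as `s` is below the growth rate of the covering numbers.
Let `δ` decrease to `0` slowly along an infinite concatenation of orbit segments starting in such
sets, each segment being long compared with the gap before it and short compared with everything
before that. By specification, with precisions improving from level to level, every sequence of
choices of segments is shadowed by some orbit. The Birkhoff averages along that orbit converge to
`∫ Φ_i dμ` because the precision tends to `0`, so the orbit is `μ`-generic. The shadowing orbits
carry the uniform product measure on the sequences of choices: a Bowen ball of order `m` determines
the choices made before time `m`, hence has mass at most `exp (-τ m)` for large `m` and any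
`τ < s`, and the mass distribution principle bounds the entropy from below.
-/

open Asymptotics

/-! ### Sequences of indices and asymptotics -/

/-- The lower adjoint `t` lists the starting points of consecutive intervals covering `ℕ`;
the upper adjoint sends a number to the index of its interval. -/
lemma exists_galoisConnection_of_strictMono {t : ℕ → ℕ} (ht : StrictMono t) (ht0 : t 0 = 0) :
    ∃ u : ℕ → ℕ, GaloisConnection t u := by
  refine ⟨fun m => Nat.findGreatest (fun i => t i ≤ m) m, fun i m => ⟨fun hi => ?_, fun hi => ?_⟩⟩
  · exact Nat.le_findGreatest (ht.le_apply.trans hi) hi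
  · exact (ht.monotone hi).trans
      (Nat.findGreatest_spec (P := fun i => t i ≤ m) (Nat.zero_le m) (ht0.trans_le m.zero_le))

lemma tendsto_atTop_of_galoisConnection {t u : ℕ → ℕ} (h : GaloisConnection t u) :
    Tendsto u atTop atTop :=
  h.monotone_u.tendsto_atTop_atTop fun i => ⟨t i, h.le_u_l i⟩

lemma exists_galoisConnection_comp_le (Q : ℕ → ℕ) :
    ∃ b κ : ℕ → ℕ, GaloisConnection b κ ∧ ∀ᶠ i in atTop, Q (κ i) ≤ i := by
  have hsucc (K : ℕ) : ∑ k ∈ Finset.range (K + 1), (Q (k + 1) + 1) =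
      ∑ k ∈ Finset.range K, (Q (k + 1) + 1) + (Q (K + 1) + 1) := Finset.sum_range_succ _ K
  obtain ⟨κ, hκ⟩ := exists_galoisConnection_of_strictMono
    (t := fun K => ∑ k ∈ Finset.range K, (Q (k + 1) + 1))
    (strictMono_nat_of_lt_succ fun K => by have := hsucc K; lia) rfl
  refine ⟨_, κ, hκ, ?_⟩
  filter_upwards [(tendsto_atTop_of_galoisConnection hκ).eventually_gt_atTop 0] with i hi
  obtain ⟨K, hK⟩ := Nat.exists_eq_add_one.2 hi
  have := hκ.l_u_le i
  rw [hK] at this ⊢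
  have := hsucc K
  lia

lemma isLittleO_of_tendsto_atTop_of_mul_le {ι : Type*} {l : Filter ι} {K u v : ι → ℕ}
    (hK : Tendsto K l atTop) (h : ∀ᶠ i in l, K i * u i ≤ v i) :
    (fun i => (u i : ℝ)) =o[l] fun i => (v i : ℝ) := by
  refine isLittleO_iff_nat_mul_le.2 fun N => ?_
  filter_upwards [h, hK.eventually_ge_atTop N] with i hi hN
  simp only [Real.norm_natCast]
  exact_mod_cast (Nat.mul_le_mul_right _ hN).trans hi

lemma isLittleO_natCast_of_isLittleO_increments {E : Type*} [NormedAddCommGroup E]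
    {S : ℕ → E} {C : ℝ≥0} (hS : LipschitzWith C S) (hS0 : S 0 = 0)
    {t : ℕ → ℕ} (ht : StrictMono t) (ht0 : t 0 = 0)
    (hblock : (fun i => S (t (i + 1)) - S (t i)) =o[atTop] fun i => (t (i + 1) - t i : ℝ))
    (hgrow : (fun i => (t (i + 1) - t i : ℝ)) =o[atTop] fun i => (t i : ℝ)) :
    S =o[atTop] fun m => (m : ℝ) := by
  obtain ⟨u, htu⟩ := exists_galoisConnection_of_strictMono ht ht0
  have hu : Tendsto u atTop atTop := tendsto_atTop_of_galoisConnection htu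
  have hlt (m : ℕ) : m < t (u m + 1) := htu.lt_iff_lt.2 (u m).lt_succ_self
  have htu_le : (fun m => (t (u m) : ℝ)) =O[atTop] fun m => (m : ℝ) :=
    .of_norm_le fun m => by simpa using htu.l_u_le m
  have hends : (fun i => S (t i)) =o[atTop] fun i => (t i : ℝ) := by
    have hnonneg (i : ℕ) : (0 : ℝ) ≤ t (i + 1) - t i :=
      sub_nonneg.2 (Nat.cast_le.2 (ht i.lt_succ_self).le)
    have htop : Tendsto (fun n => (t n : ℝ)) atTop atTop :=
      tendsto_natCast_atTop_atTop.comp ht.tendsto_atTop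
    have hsum (n : ℕ) : ∑ i ∈ Finset.range n, (t (i + 1) - t i : ℝ) = t n := by
      rw [Finset.sum_range_sub (fun i => (t i : ℝ)), ht0, Nat.cast_zero, sub_zero]
    simpa only [hsum, Finset.sum_range_sub (fun i => S (t i)), ht0, hS0, sub_zero] using
      hblock.sum_range hnonneg (by simpa only [hsum] using htop)
  have hinside : (fun m => S m - S (t (u m))) =O[atTop]
      fun m => (t (u m + 1) - t (u m) : ℝ) := by
    refine .of_bound C (.of_forall fun m => ?_)
    rw [← dist_eq_norm]
    refine (hS.dist_le_mul m (t (u m))).trans (mul_le_mul_of_nonneg_left ?_ C.coe_nonneg)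
    rw [Nat.dist_eq, abs_of_nonneg (sub_nonneg.2 (Nat.cast_le.2 (htu.l_u_le m)))]
    refine (sub_le_sub_right ?_ _).trans (le_abs_self _)
    exact_mod_cast (hlt m).le
  simpa using (hinside.trans_isLittleO (hgrow.comp_tendsto hu)).add (hends.comp_tendsto hu)
    |>.trans_isBigO htu_le

/-! ### Blocks separated by gaps -/

/-- The start of the `i`-th block when `ℕ` is cut into consecutive blocks, the `i`-th one made of
a gap of length `g i` followed by a segment of length `ℓ i`. -/
def blockStart (g ℓ : ℕ → ℕ) (i : ℕ) : ℕ :=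
  ∑ j ∈ Finset.range i, (g j + ℓ j)

/-- Gaps are negligible compared with the segments following them, and segments are negligible
compared with all that precedes them. -/
structure IsSlowBlockLayout (g ℓ : ℕ → ℕ) : Prop where
  length_pos (i : ℕ) : 0 < ℓ i
  gap_isLittleO : (fun i => (g i : ℝ)) =o[atTop] fun i => (ℓ i : ℝ)
  length_isLittleO : (fun i => (ℓ i : ℝ)) =o[atTop] fun i => (blockStart g ℓ i : ℝ)

lemma blockStart_zero (g ℓ : ℕ → ℕ) : blockStart g ℓ 0 = 0 :=
  rfl

lemma blockStart_succ (g ℓ : ℕ → ℕ) (i : ℕ) :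
    blockStart g ℓ (i + 1) = blockStart g ℓ i + g i + ℓ i := by
  rw [blockStart, Finset.sum_range_succ, ← blockStart, add_assoc]

lemma strictMono_blockStart (g : ℕ → ℕ) {ℓ : ℕ → ℕ} (hℓ : ∀ i, 0 < ℓ i) :
    StrictMono (blockStart g ℓ) :=
  strictMono_nat_of_lt_succ fun i => by have := hℓ i; have := blockStart_succ g ℓ i; lia

namespace IsSlowBlockLayout

variable {g ℓ : ℕ → ℕ}

lemma tendsto_blockStart (h : IsSlowBlockLayout g ℓ) :
    Tendsto (fun i => (blockStart g ℓ i : ℝ)) atTop atTop :=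
  tendsto_natCast_atTop_atTop.comp (strictMono_blockStart g h.length_pos).tendsto_atTop

lemma isLittleO_increments (h : IsSlowBlockLayout g ℓ) :
    (fun i => (blockStart g ℓ (i + 1) - blockStart g ℓ i : ℝ)) =o[atTop]
      fun i => (blockStart g ℓ i : ℝ) := by
  refine ((h.gap_isLittleO.trans h.length_isLittleO).add h.length_isLittleO).congr_left fun i => ?_
  rw [blockStart_succ]
  push_cast
  ring

lemma isEquivalent_sum_length (h : IsSlowBlockLayout g ℓ) :
    (fun i => (blockStart g ℓ (i + 1) : ℝ)) ~[atTop]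
      fun i => ((∑ j ∈ Finset.range i, ℓ j : ℕ) : ℝ) := by
  have hgaps : (fun i => ((∑ j ∈ Finset.range i, g j : ℕ) : ℝ)) =o[atTop]
      fun i => (blockStart g ℓ i : ℝ) := by
    have hg : (fun i => (g i : ℝ)) =o[atTop] fun i => ((g i + ℓ i : ℕ) : ℝ) :=
      h.gap_isLittleO.trans_le fun i => by
        simpa only [Real.norm_natCast, Nat.cast_le] using Nat.le_add_left _ _
    simp only [blockStart, Nat.cast_sum]
    exact hg.sum_range (fun i => Nat.cast_nonneg _)
      (by simpa only [blockStart, Nat.cast_sum] using h.tendsto_blockStart)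
  have hnext : (fun i => (blockStart g ℓ (i + 1) : ℝ)) ~[atTop] fun i => (blockStart g ℓ i : ℝ) :=
    h.isLittleO_increments
  refine hnext.trans (IsEquivalent.symm (hgaps.neg_left.congr_left fun i => ?_))
  simp only [blockStart, Finset.sum_add_distrib, Nat.cast_add, Pi.sub_apply]
  ring

lemma eventually_mul_blockStart_succ_le (h : IsSlowBlockLayout g ℓ) {τ s : ℝ} (hτs : τ < s) :
    ∀ᶠ i in atTop, τ * blockStart g ℓ (i + 1) ≤ s * (∑ j ∈ Finset.range i, ℓ j : ℕ) := by
  filter_upwards [(h.isEquivalent_sum_length.isLittleO.const_mul_left τ).bound (sub_pos.2 hτs)]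
    with i hi
  rw [Pi.sub_apply, Real.norm_natCast] at hi
  linarith [(Real.le_norm_self _).trans hi]

end IsSlowBlockLayout

/-! ### Separated sets -/

section Separated

variable [PseudoMetricSpace X]

lemma bowenBall_eq_ball_dynEntourage (T : X → X) (x : X) (n : ℕ) (ε : ℝ) :
    bowenBall T x n ε =
      UniformSpace.ball x (Dynamics.dynEntourage T {q : X × X | dist q.1 q.2 < ε} n) := by
  ext y
  rw [Dynamics.mem_ball_dynEntourage]
  rfl

lemma coverNum_le_coverMincard (T : X → X) (S : Set X) (n : ℕ) (ε : ℝ) :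
    (coverNum T S n ε : ℕ∞) ≤
      Dynamics.coverMincard T S {q : X × X | dist q.1 q.2 < ε} n := by
  refine le_iInf₂ fun F hF => Nat.cast_le.2 (Nat.sInf_le ⟨F, rfl, fun x hx => ?_⟩)
  obtain ⟨y, hyF, hxy⟩ := hF hx
  refine mem_iUnion₂.2 ⟨y, hyF, fun j hj => ?_⟩
  rw [dist_comm]
  exact Dynamics.mem_dynEntourage.1 hxy j hj

lemma coverNum_le_netMaxcard (T : X → X) (S : Set X) (n : ℕ) {ε : ℝ} (hε : 0 < ε) :
    (coverNum T S n ε : ℕ∞) ≤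
      Dynamics.netMaxcard T S {q : X × X | dist q.1 q.2 < ε / 2} n := by
  have : SetRel.IsRefl {q : X × X | dist q.1 q.2 < ε / 2} :=
    isRefl_of_mem_uniformity (Metric.dist_mem_uniformity (half_pos hε))
  have : SetRel.IsSymm {q : X × X | dist q.1 q.2 < ε / 2} :=
    ⟨fun x y h => by simpa [dist_comm] using h⟩
  refine (coverNum_le_coverMincard T S n ε).trans
    ((Dynamics.coverMincard_antitone T S n ?_).trans (Dynamics.coverMincard_le_netMaxcard T S n))
  rintro ⟨x, z⟩ ⟨y, hxy, hyz⟩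
  exact (dist_triangle x y z).trans_lt ((add_lt_add hxy hyz).trans_eq (add_halves ε))

lemma exists_pairwiseDisjoint_bowenBall (T : X → X) (S : Set X) (n : ℕ) {ε : ℝ} (hε : 0 < ε) :
    ∃ W : Finset X, ↑W ⊆ S ∧ (W : Set X).PairwiseDisjoint (fun x => bowenBall T x n (ε / 2)) ∧
      coverNum T S n ε ≤ W.card := by
  simp only [bowenBall_eq_ball_dynEntourage, ← and_assoc]
  have hle := coverNum_le_netMaxcard T S n hε
  rcases eq_top_or_lt_top (Dynamics.netMaxcard T S {q : X × X | dist q.1 q.2 < ε / 2} n) with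
    htop | hlt
  · exact (Dynamics.netMaxcard_infinite_iff T S _ n).1 htop _
  · obtain ⟨W, hW, hcard⟩ := (Dynamics.netMaxcard_finite_iff T S _ n).1 hlt
    exact ⟨W, hW, by rwa [← hcard, Nat.cast_le] at hle⟩

lemma exists_pairwiseDisjoint_bowenBall_of_lt_limsup (T : X → X) (S : ℕ → Set X) {ε : ℝ}
    (hε : 0 < ε) {s : ℝ≥0}
    (hs : (s : ℝ≥0∞) < limsup (fun n : ℕ =>
      ENNReal.ofReal (Real.log (coverNum T (S n) n ε) / (n : ℝ))) atTop) (n₀ : ℕ) :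
    ∃ n ≥ n₀, ∃ W : Finset X, ↑W ⊆ S n ∧
      (W : Set X).PairwiseDisjoint (fun x => bowenBall T x n (ε / 2)) ∧
      Real.exp (s * n) ≤ W.card := by
  obtain ⟨n, hsn, hn, hn1⟩ := ((frequently_lt_of_lt_limsup (h := hs)).and_eventually
    ((eventually_ge_atTop n₀).and (eventually_gt_atTop 0))).exists
  obtain ⟨W, hWS, hW, hcard⟩ := exists_pairwiseDisjoint_bowenBall T (S n) n hε
  refine ⟨n, hn, W, hWS, hW, le_trans ?_ (Nat.cast_le.2 hcard)⟩
  rw [ENNReal.lt_ofReal_iff_toReal_lt ENNReal.coe_ne_top, ENNReal.coe_toReal,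
    lt_div_iff₀ (Nat.cast_pos.2 hn1)] at hsn
  have hlog : 0 < Real.log (coverNum T (S n) n ε) := lt_of_le_of_lt (by positivity) hsn
  have hN : coverNum T (S n) n ε ≠ 0 := fun h0 => by simp [h0] at hlog
  exact (Real.le_log_iff_exp_le (by positivity)).1 hsn.le

end Separated

/-! ### Lower bounds for the Bowen entropy -/

lemma infinitePi_uniformOn_le_prod_inv_card {ι : Type*} {α : ι → Type*} [∀ i, Fintype (α i)]
    [∀ i, Nonempty (α i)] [∀ i, MeasurableSpace (α i)] [∀ i, MeasurableSingletonClass (α i)]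
    (I : Finset ι) {A : Set (∀ i, α i)}
    (hA : ∀ ω ∈ A, ∀ ω' ∈ A, ∀ i ∈ I, ω i = ω' i) :
    Measure.infinitePi (fun i => ProbabilityTheory.uniformOn (univ : Set (α i))) A ≤
      ∏ i ∈ I, (Fintype.card (α i) : ℝ≥0∞)⁻¹ := by
  have (i : ι) : IsProbabilityMeasure (ProbabilityTheory.uniformOn (univ : Set (α i))) :=
    ProbabilityTheory.isProbabilityMeasure_uniformOn finite_univ univ_nonempty
  rcases A.eq_empty_or_nonempty with rfl | ⟨ω, hω⟩
  · simp
  · calc Measure.infinitePi (fun i => ProbabilityTheory.uniformOn (univ : Set (α i))) A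
        ≤ Measure.infinitePi (fun i => ProbabilityTheory.uniformOn (univ : Set (α i)))
            ((I : Set ι).pi fun i => {ω i}) :=
          measure_mono fun ω' hω' i hi => hA ω' hω' ω hω i hi
      _ = ∏ i ∈ I, (Fintype.card (α i) : ℝ≥0∞)⁻¹ := by
          rw [Measure.infinitePi_pi _ fun i _ => measurableSet_singleton _]
          refine Finset.prod_congr rfl fun i _ => ?_
          simp [ProbabilityTheory.uniformOn_univ]

lemma prod_inv_natCast_le_exp_neg_sum {ι : Type*} {N : ι → ℕ} {a : ι → ℝ}
    (h : ∀ i, Real.exp (a i) ≤ N i) (I : Finset ι) :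
    ∏ i ∈ I, (N i : ℝ≥0∞)⁻¹ ≤ ENNReal.ofReal (Real.exp (-∑ i ∈ I, a i)) := by
  rw [← Finset.sum_neg_distrib, Real.exp_sum,
    ENNReal.ofReal_prod_of_nonneg fun _ _ => (Real.exp_pos _).le]
  refine Finset.prod_le_prod' fun i _ => ?_
  rw [Real.exp_neg, ENNReal.ofReal_inv_of_pos (Real.exp_pos _), ENNReal.inv_le_inv,
    ← ENNReal.ofReal_natCast]
  exact ENNReal.ofReal_le_ofReal (h i)

section LowerBound

variable [PseudoMetricSpace X]

/-- In the block layout with gaps `g` and lengths `ℓ`, the orbit of `y` follows, after each gap,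
the orbit segment of length `ℓ i` of `x i` within distance `ρ i`. -/
def ShadowsConcatenation (T : X → X) (g ℓ : ℕ → ℕ) (x : ℕ → X) (ρ : ℕ → ℝ) (y : X) : Prop :=
  ∀ i, ∀ j < ℓ i, dist (T^[blockStart g ℓ i + g i + j] y) (T^[j] (x i)) ≤ ρ i

lemma ShadowsConcatenation.mono {T : X → X} {g ℓ : ℕ → ℕ} {x : ℕ → X} {ρ ρ' : ℕ → ℝ} {y : X}
    (hy : ShadowsConcatenation T g ℓ x ρ y) (hρ : ρ ≤ ρ') : ShadowsConcatenation T g ℓ x ρ' y :=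
  fun i j hj => (hy i j hj).trans (hρ i)

lemma ShadowsConcatenation.iterate_mem_bowenBall {T : X → X} {g ℓ : ℕ → ℕ} {x : ℕ → X} {h : ℝ}
    {y q : X} (hy : ShadowsConcatenation T g ℓ x (fun _ => h) y) {m : ℕ}
    (hyq : y ∈ bowenBall T q m h) {i : ℕ} (hm : blockStart g ℓ (i + 1) ≤ m) :
    T^[blockStart g ℓ i + g i] q ∈ bowenBall T (x i) (ℓ i) (2 * h) := by
  intro j hj
  have hlt : blockStart g ℓ i + g i + j < m := by have := blockStart_succ g ℓ i; lia
  rw [← Function.iterate_add_apply, add_comm j]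
  calc dist (T^[j] (x i)) (T^[blockStart g ℓ i + g i + j] q)
      ≤ dist (T^[blockStart g ℓ i + g i + j] y) (T^[j] (x i))
        + dist (T^[blockStart g ℓ i + g i + j] y) (T^[blockStart g ℓ i + g i + j] q) :=
        dist_triangle_left _ _ _
    _ < 2 * h := by
        rw [two_mul, dist_comm _ (T^[_] q)]
        exact add_lt_add_of_le_of_lt (hy i j hj) (hyq _ hlt)

lemma measure_univ_le_bowenH {Ω : Type*} [MeasurableSpace Ω] (P : Measure Ω) {T : X → X}
    {Z : Set X} {Y : Ω → X} (hY : ∀ ω, Y ω ∈ Z) {s ε : ℝ} {m₀ : ℕ}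
    (hP : ∀ m ≥ m₀, ∀ x, P (Y ⁻¹' bowenBall T x m ε) ≤ ENNReal.ofReal (Real.exp (-s * m))) :
    P univ ≤ bowenH T Z s ε m₀ := by
  refine le_iInf₂ fun C hC => le_iInf₂ fun hCm hcov => ?_
  calc P univ ≤ P (⋃ q ∈ C, Y ⁻¹' bowenBall T q.1 q.2 ε) :=
        measure_mono fun ω _ => by simpa using hcov (hY ω)
    _ ≤ ∑' q : C, P (Y ⁻¹' bowenBall T q.1.1 q.1.2 ε) := measure_biUnion_le P hC _
    _ ≤ _ := ENNReal.tsum_le_tsum fun q => hP _ (hCm q q.2) _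

lemma le_bowenEntropyRes_of_measure_preimage_le {Ω : Type*} [MeasurableSpace Ω] (P : Measure Ω)
    [NeZero P] {T : X → X} {Z : Set X} {Y : Ω → X} (hY : ∀ ω, Y ω ∈ Z) {s : ℝ≥0} {ε : ℝ}
    (hP : ∀ᶠ m : ℕ in atTop, ∀ x,
      P (Y ⁻¹' bowenBall T x m ε) ≤ ENNReal.ofReal (Real.exp (-s * m))) :
    (s : ℝ≥0∞) ≤ bowenEntropyRes T Z ε := by
  refine le_sInf ?_
  rintro _ ⟨τ, hτ, rfl⟩
  by_contra! hlt
  have hτs : (τ : ℝ) ≤ s := mod_cast hlt.le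
  obtain ⟨m₀, hm₀⟩ := eventually_atTop.1 hP
  have hle : P univ ≤ bowenH T Z τ ε m₀ := measure_univ_le_bowenH P hY fun m hm x =>
    (hm₀ m hm x).trans (ENNReal.ofReal_le_ofReal (Real.exp_le_exp.2 (by gcongr)))
  have hzero : bowenH T Z τ ε m₀ = 0 := ENNReal.iSup_eq_zero.1 hτ m₀
  exact NeZero.ne P (Measure.measure_univ_eq_zero.1 (le_zero_iff.1 (hle.trans_eq hzero)))

theorem le_bowenEntropyRes_of_shadowsConcatenation {T : X → X} {Z : Set X} {h : ℝ}
    {g ℓ : ℕ → ℕ} (hgℓ : IsSlowBlockLayout g ℓ) {W : ℕ → Finset X}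
    (hW : ∀ i, (W i : Set X).PairwiseDisjoint fun x => bowenBall T x (ℓ i) (2 * h))
    {s : ℝ≥0} (hcard : ∀ i, Real.exp (s * ℓ i) ≤ (W i).card)
    (hZ : ∀ ω : ∀ i, W i, ∃ y ∈ Z, ShadowsConcatenation T g ℓ (fun i => ω i) (fun _ => h) y) :
    (s : ℝ≥0∞) ≤ bowenEntropyRes T Z h := by
  choose Y hYZ hY using hZ
  have hWne (i : ℕ) : Nonempty (W i) := by
    have : (0 : ℝ) < (W i).card := (Real.exp_pos _).trans_le (hcard i)
    exact (Finset.card_pos.1 (Nat.cast_pos.1 this)).to_subtype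
  let _ (i : ℕ) : MeasurableSpace (W i) := ⊤
  let P := Measure.infinitePi fun i => ProbabilityTheory.uniformOn (univ : Set (W i))
  have (i : ℕ) : IsProbabilityMeasure (ProbabilityTheory.uniformOn (univ : Set (W i))) :=
    ProbabilityTheory.isProbabilityMeasure_uniformOn finite_univ univ_nonempty
  have hball {m i : ℕ} (hm : blockStart g ℓ i ≤ m) (q : X) :
      P (Y ⁻¹' bowenBall T q m h) ≤
        ENNReal.ofReal (Real.exp (-(s * (∑ j ∈ Finset.range i, ℓ j : ℕ)))) := by
    rw [Nat.cast_sum, Finset.mul_sum]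
    refine (infinitePi_uniformOn_le_prod_inv_card (Finset.range i) fun ω hω ω' hω' j hj => ?_).trans
      (prod_inv_natCast_le_exp_neg_sum (fun j => by simpa using hcard j) _)
    have hjm : blockStart g ℓ (j + 1) ≤ m :=
      ((strictMono_blockStart g hgℓ.length_pos).monotone (Finset.mem_range.1 hj)).trans hm
    exact Subtype.ext ((hW j).elim_set (ω j).2 (ω' j).2 _
      ((hY ω).iterate_mem_bowenBall hω hjm) ((hY ω').iterate_mem_bowenBall hω' hjm))
  refine ENNReal.le_of_forall_nnreal_lt fun τ hτ =>
    le_bowenEntropyRes_of_measure_preimage_le P hYZ ?_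
  obtain ⟨u, hu⟩ := exists_galoisConnection_of_strictMono
    (strictMono_blockStart g hgℓ.length_pos) (blockStart_zero g ℓ)
  have hτs : (τ : ℝ) < s := mod_cast hτ
  filter_upwards [(tendsto_atTop_of_galoisConnection hu).eventually
    (hgℓ.eventually_mul_blockStart_succ_le hτs)] with m hm q
  refine (hball (hu.l_u_le m) q).trans (ENNReal.ofReal_le_ofReal (Real.exp_le_exp.2 ?_))
  have hlt : m ≤ blockStart g ℓ (u m + 1) := (hu.lt_iff_lt.2 (u m).lt_succ_self).le
  rw [neg_mul, neg_le_neg_iff]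
  exact (mul_le_mul_of_nonneg_left (Nat.cast_le.2 hlt) τ.coe_nonneg).trans hm

end LowerBound

/-! ### Shadowing with increasing precision -/

section Specification

variable [PseudoMetricSpace X]

/-- Finitely many (at least two) orbit segments can be followed by a single orbit within `ε` as
soon as consecutive segments are at least `m` apart. -/
def IsSpecificationGap (T : X → X) (ε : ℝ) (m : ℕ) : Prop :=
  ∀ k : ℕ, 2 ≤ k → ∀ x : ℕ → X, ∀ a b : ℕ → ℕ, (∀ i < k, a i ≤ b i) →
    (∀ i, i + 1 < k → b i + m ≤ a (i + 1)) →
    ∃ y : X, ∀ i < k, ∀ n ≤ b i - a i, dist (T^[a i + n] y) (T^[n] (x i)) < ε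

lemma IsSpecificationGap.exists_extension {T : X → X} {ε : ℝ} {m : ℕ}
    (hm : IsSpecificationGap T ε m) (hε : 0 < ε) (y : X) (x : ℕ → X) {N L : ℕ} {a n : ℕ → ℕ}
    (hn : ∀ q, 0 < n q) (hL : L + m ≤ a 0)
    (ha : ∀ q, q + 1 < N → a q + n q + m ≤ a (q + 1)) :
    ∃ z, (∀ j ≤ L, dist (T^[j] z) (T^[j] y) < ε) ∧
      ∀ q < N, ∀ j < n q, dist (T^[a q + j] z) (T^[j] (x q)) < ε := by
  rcases N.eq_zero_or_pos with rfl | hN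
  · exact ⟨y, fun j _ => by rwa [dist_self], by simp⟩
  obtain ⟨z, hz⟩ := hm (N + 1) (by lia) (fun | 0 => y | q + 1 => x q)
    (fun | 0 => 0 | q + 1 => a q) (fun | 0 => L | q + 1 => a q + (n q - 1))
    (fun | 0, _ => L.zero_le | q + 1, _ => Nat.le_add_right _ _)
    (fun
      | 0, _ => hL
      | q + 1, hq => by have := hn q; have := ha q (by lia); dsimp only; lia)
  refine ⟨z, fun j hj => ?_, fun q hq j hj => hz (q + 1) (by lia) j ?_⟩
  · simpa using hz 0 (by lia) j hj
  · dsimp only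
    lia

variable {T : X → X} {r : ℕ → ℝ} {M b κ ℓ : ℕ → ℕ}

/-- The step from level `K` to level `K + 1` costs `r K - r (K + 1)`, so the errors telescope. -/
lemma exists_shadows_initial_levels (hr : StrictAnti r)
    (hM : ∀ K, IsSpecificationGap T (r K - r (K + 1)) (M K)) (hbκ : GaloisConnection b κ)
    (hℓ : ∀ i, 0 < ℓ i) (x : ℕ → X) (K : ℕ) :
    ∃ y, ∀ i < b K, ∀ j < ℓ i,
      dist (T^[blockStart (M ∘ κ) ℓ i + M (κ i) + j] y) (T^[j] (x i)) ≤ r (κ i) - r K := by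
  have hsucc (i : ℕ) : blockStart (M ∘ κ) ℓ (i + 1) = blockStart (M ∘ κ) ℓ i + M (κ i) + ℓ i :=
    blockStart_succ _ ℓ i
  induction K with
  | zero => exact ⟨x 0, by simp [Nat.le_zero.1 (hbκ.l_le (Nat.zero_le (κ 0)))]⟩
  | succ K ih =>
    obtain ⟨y, hy⟩ := ih
    have hlevel {i : ℕ} (h1 : b K ≤ i) (h2 : i < b (K + 1)) : κ i = K :=
      le_antisymm (Nat.lt_succ_iff.1 (hbκ.lt_iff_lt.1 h2)) (hbκ.le_u h1)
    obtain ⟨z, hzy, hzx⟩ := (hM K).exists_extension (sub_pos.2 (hr K.lt_succ_self)) y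
      (fun q => x (b K + q)) (N := b (K + 1) - b K) (L := blockStart (M ∘ κ) ℓ (b K))
      (a := fun q => blockStart (M ∘ κ) ℓ (b K + q) + M K) (n := fun q => ℓ (b K + q))
      (fun q => hℓ _) le_rfl fun q hq => by
        have := hsucc (b K + q)
        rw [hlevel (Nat.le_add_right _ _) (by lia)] at this
        lia
    refine ⟨z, fun i hi j hj => ?_⟩
    rcases lt_or_ge i (b K) with hiK | hKi
    · have hle : blockStart (M ∘ κ) ℓ i + M (κ i) + j ≤ blockStart (M ∘ κ) ℓ (b K) := by
        have := (strictMono_blockStart (M ∘ κ) hℓ).monotone (Nat.succ_le_of_lt hiK)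
        have := hsucc i
        lia
      linarith [dist_triangle (T^[blockStart (M ∘ κ) ℓ i + M (κ i) + j] z)
        (T^[blockStart (M ∘ κ) ℓ i + M (κ i) + j] y) (T^[j] (x i)), hzy _ hle, hy i hiK j hj]
    · obtain ⟨q, rfl⟩ := Nat.exists_eq_add_of_le hKi
      rw [hlevel hKi hi]
      exact (hzx q (by lia) j hj).le

theorem exists_shadowsConcatenation [CompactSpace X] (hT : Continuous T) (hr : StrictAnti r)
    (hr0 : ∀ K, 0 ≤ r K) (hM : ∀ K, IsSpecificationGap T (r K - r (K + 1)) (M K))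
    (hbκ : GaloisConnection b κ) (hℓ : ∀ i, 0 < ℓ i) (x : ℕ → X) :
    ∃ y, ShadowsConcatenation T (M ∘ κ) ℓ x (r ∘ κ) y := by
  let S (K : ℕ) : Set X := {y | ∀ i < b K, ∀ j < ℓ i,
    dist (T^[blockStart (M ∘ κ) ℓ i + M (κ i) + j] y) (T^[j] (x i)) ≤ r (κ i)}
  have hclosed (K : ℕ) : IsClosed (S K) := by
    simp only [S, ofPred_forall]
    exact isClosed_iInter fun i => isClosed_iInter fun _ => isClosed_iInter fun j =>
      isClosed_iInter fun _ => isClosed_le ((hT.iterate _).dist continuous_const) continuous_const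
  obtain ⟨y, hy⟩ := IsCompact.nonempty_iInter_of_sequence_nonempty_isCompact_isClosed S
    (fun K y hy i hi => hy i (hi.trans_le (hbκ.monotone_l K.le_succ)))
    (fun K => (exists_shadows_initial_levels hr hM hbκ hℓ x K).imp fun y hy i hi j hj =>
      (hy i hi j hj).trans (sub_le_self _ (hr0 K)))
    (hclosed 0).isCompact hclosed
  exact ⟨y, fun i => mem_iInter.1 hy (κ i + 1) i (hbκ.lt_iff_lt.2 (κ i).lt_succ_self)⟩

end Specification

/-! ### Birkhoff averages -/

section Birkhoff

variable {E : Type*} [NormedAddCommGroup E] {T : X → X} {f : X → E}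

lemma lipschitzWith_birkhoffSum {C : ℝ≥0} (hf : ∀ x, ‖f x‖ ≤ C) (x : X) :
    LipschitzWith C fun n => birkhoffSum T f n x := by
  refine LipschitzWith.of_dist_le_mul fun m n => ?_
  wlog hmn : m ≤ n generalizing m n
  · rw [dist_comm, dist_comm m]
    exact this n m (le_of_not_ge hmn)
  rw [Nat.dist_eq, abs_sub_comm, abs_of_nonneg (sub_nonneg.2 (Nat.cast_le.2 hmn)),
    ← Nat.cast_sub hmn]
  calc dist (birkhoffSum T f m x) (birkhoffSum T f n x)
      ≤ ∑ _k ∈ Finset.Ico m n, (C : ℝ) :=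
        dist_le_Ico_sum_of_dist_le (f := fun n => birkhoffSum T f n x) hmn fun _ _ => by
          rw [birkhoffSum_succ, dist_self_add_right]
          exact hf _
    _ = C * (n - m : ℕ) := by rw [Finset.sum_const, Nat.card_Ico, nsmul_eq_mul, mul_comm]

lemma norm_birkhoffAverage_le [NormedSpace ℝ E] {C : ℝ} (hf : ∀ x, ‖f x‖ ≤ C) (n : ℕ) (x : X) :
    ‖birkhoffAverage ℝ T f n x‖ ≤ C := by
  have hC : 0 ≤ C := (norm_nonneg _).trans (hf x)
  rw [birkhoffAverage, norm_smul, norm_inv, Real.norm_natCast, inv_mul_eq_div]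
  refine div_le_of_le_mul₀ n.cast_nonneg hC ?_
  simpa [birkhoffSum, mul_comm] using norm_sum_le_of_le (Finset.range n) fun j _ => hf (T^[j] x)

lemma tendsto_birkhoffAverage_iff_isLittleO [NormedSpace ℝ E] {ι : Type*} {l : Filter ι}
    {c : E} {n : ι → ℕ} {x : ι → X} (hn : ∀ᶠ i in l, 0 < n i) :
    Tendsto (fun i => birkhoffAverage ℝ T f (n i) (x i)) l (𝓝 c) ↔
      (fun i => birkhoffSum T (fun y => f y - c) (n i) (x i)) =o[l] fun i => (n i : ℝ) := by
  rw [tendsto_iff_norm_sub_tendsto_zero, ← isLittleO_norm_left, isLittleO_iff_tendsto']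
  · refine tendsto_congr' (hn.mono fun i hi => ?_)
    have hi' : (n i : ℝ) ≠ 0 := Nat.cast_ne_zero.2 hi.ne'
    have hsum : birkhoffSum T (fun y => f y - c) (n i) (x i) =
        (n i : ℝ) • (birkhoffAverage ℝ T f (n i) (x i) - c) := by
      rw [smul_sub, birkhoffAverage, smul_inv_smul₀ hi', Nat.cast_smul_eq_nsmul]
      simp [birkhoffSum, Finset.sum_sub_distrib]
    simp only [hsum, norm_smul, Real.norm_natCast, mul_div_cancel_left₀ _ hi']
  · exact hn.mono fun i hi h => absurd h (Nat.cast_ne_zero.2 hi.ne')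

variable [PseudoMetricSpace X]

lemma isLittleO_birkhoffSum_sub_of_dist_iterate_le (hf : UniformContinuous f) {ι : Type*}
    {l : Filter ι} {n : ι → ℕ} {x z : ι → X} {ρ : ι → ℝ} (hρ : Tendsto ρ l (𝓝 0))
    (hzx : ∀ i, ∀ j < n i, dist (T^[j] (z i)) (T^[j] (x i)) ≤ ρ i) :
    (fun i => birkhoffSum T f (n i) (z i) - birkhoffSum T f (n i) (x i)) =o[l]
      fun i => (n i : ℝ) := by
  refine isLittleO_iff.2 fun ε hε => ?_
  obtain ⟨δ, hδ, hfδ⟩ := Metric.uniformContinuous_iff.1 hf ε hε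
  filter_upwards [hρ.eventually_lt_const hδ] with i hi
  rw [← dist_eq_norm, Real.norm_natCast]
  calc dist (birkhoffSum T f (n i) (z i)) (birkhoffSum T f (n i) (x i))
      ≤ ∑ j ∈ Finset.range (n i), dist (f (T^[j] (z i))) (f (T^[j] (x i))) :=
        dist_birkhoffSum_birkhoffSum_le T f _ _ _
    _ ≤ ∑ _j ∈ Finset.range (n i), ε := Finset.sum_le_sum fun j hj =>
        (hfδ ((hzx i j (Finset.mem_range.1 hj)).trans_lt hi)).le
    _ = ε * n i := by rw [Finset.sum_const, Finset.card_range, nsmul_eq_mul, mul_comm]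

variable {g ℓ : ℕ → ℕ} {x : ℕ → X} {ρ : ℕ → ℝ} {y : X}

lemma ShadowsConcatenation.isLittleO_birkhoffSum (hy : ShadowsConcatenation T g ℓ x ρ y)
    (hgℓ : IsSlowBlockLayout g ℓ) (hρ : Tendsto ρ atTop (𝓝 0)) (hf : UniformContinuous f)
    {C : ℝ≥0} (hfC : ∀ x, ‖f x‖ ≤ C)
    (hx : (fun i => birkhoffSum T f (ℓ i) (x i)) =o[atTop] fun i => (ℓ i : ℝ)) :
    (fun n => birkhoffSum T f n y) =o[atTop] fun n => (n : ℝ) := by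
  refine isLittleO_natCast_of_isLittleO_increments (lipschitzWith_birkhoffSum hfC y)
    (birkhoffSum_zero T f y) (strictMono_blockStart g hgℓ.length_pos) (blockStart_zero g ℓ) ?_
    hgℓ.isLittleO_increments
  have hgap : (fun i => birkhoffSum T f (g i) (T^[blockStart g ℓ i] y)) =o[atTop]
      fun i => (ℓ i : ℝ) := by
    refine (IsBigO.of_bound C (.of_forall fun i => ?_)).trans_isLittleO hgℓ.gap_isLittleO
    simpa [Nat.dist_eq] using
      (lipschitzWith_birkhoffSum (T := T) hfC (T^[blockStart g ℓ i] y)).dist_le_mul (g i) 0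
  have hsegment : (fun i => birkhoffSum T f (ℓ i) (T^[blockStart g ℓ i + g i] y)) =o[atTop]
      fun i => (ℓ i : ℝ) := by
    refine ((isLittleO_birkhoffSum_sub_of_dist_iterate_le hf hρ fun i j hj => ?_).add hx
      |>.congr_left fun i => sub_add_cancel _ _)
    rw [← Function.iterate_add_apply, add_comm j]
    exact hy i j hj
  refine ((hgap.add hsegment).congr_left fun i => ?_).trans_le fun i => ?_
  · rw [blockStart_succ, add_assoc, birkhoffSum_add, birkhoffSum_add, add_sub_cancel_left,
      ← Function.iterate_add_apply, add_comm (g i)]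
  · rw [blockStart_succ, Real.norm_natCast]
    push_cast
    rw [add_assoc, add_sub_cancel_left]
    exact (le_add_of_nonneg_left (Nat.cast_nonneg _)).trans (le_abs_self _)

lemma ShadowsConcatenation.tendsto_birkhoffAverage [NormedSpace ℝ E] {c : E}
    (hy : ShadowsConcatenation T g ℓ x ρ y) (hgℓ : IsSlowBlockLayout g ℓ)
    (hρ : Tendsto ρ atTop (𝓝 0)) (hf : UniformContinuous f) {C : ℝ≥0} (hfC : ∀ x, ‖f x‖ ≤ C)
    (hx : Tendsto (fun i => birkhoffAverage ℝ T f (ℓ i) (x i)) atTop (𝓝 c)) :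
    Tendsto (fun n => birkhoffAverage ℝ T f n y) atTop (𝓝 c) := by
  rw [tendsto_birkhoffAverage_iff_isLittleO (.of_forall hgℓ.length_pos)] at hx
  exact (tendsto_birkhoffAverage_iff_isLittleO (n := fun n => n) (x := fun _ => y)
    (eventually_gt_atTop 0)).2 <| hy.isLittleO_birkhoffSum hgℓ hρ (hf.sub uniformContinuous_const)
      (C := C + ‖c‖₊) (fun x => (norm_sub_le _ _).trans (add_le_add (hfC x) le_rfl)) hx

end Birkhoff

/-! ### Generic points and approximate level sets -/

lemma birkhoffAvgR_eq_birkhoffAverage (T : X → X) (f : X → ℝ) (n : ℕ) (x : X) :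
    birkhoffAvgR T f n x = birkhoffAverage ℝ T f n x :=
  div_eq_inv_mul _ _

lemma mul_abs_birkhoffAvgR_sub_lt_of_mem_levelSet {T : X → X} {Φ : ℕ → X → ℝ} {p B α : ℕ → ℝ}
    (hp : ∀ i, 0 ≤ p i) (hB : ∀ i x, |Φ i x| ≤ B i) (hpB : Summable fun i => p i * B i)
    (hpα : Summable fun i => p i * |α i|) {δ : ℝ} {n : ℕ} {x : X} (hx : x ∈ levelSet T Φ p α δ n)
    (i : ℕ) : p i * |birkhoffAvgR T (Φ i) n x - α i| < δ := by
  have hnonneg (i : ℕ) : 0 ≤ p i * |birkhoffAvgR T (Φ i) n x - α i| :=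
    mul_nonneg (hp i) (abs_nonneg _)
  have havg (i : ℕ) : |birkhoffAvgR T (Φ i) n x| ≤ B i := by
    rw [birkhoffAvgR_eq_birkhoffAverage]
    exact norm_birkhoffAverage_le (f := Φ i) (hB i) n x
  have hsum : Summable fun i => p i * |birkhoffAvgR T (Φ i) n x - α i| := by
    refine (hpB.add hpα).of_nonneg_of_le hnonneg fun i => ?_
    rw [← mul_add]
    exact mul_le_mul_of_nonneg_left ((abs_sub _ _).trans (add_le_add_left (havg i) _)) (hp i)
  exact (hsum.le_tsum i fun j _ => hnonneg j).trans_lt hx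

lemma tendsto_birkhoffAverage_of_mem_levelSet {T : X → X} {Φ : ℕ → X → ℝ} {p B α : ℕ → ℝ}
    (hp : ∀ i, 0 < p i) (hB : ∀ i x, |Φ i x| ≤ B i) (hpB : Summable fun i => p i * B i)
    (hpα : Summable fun i => p i * |α i|) {ι : Type*} {l : Filter ι} {δ : ι → ℝ}
    (hδ : Tendsto δ l (𝓝 0)) {n : ι → ℕ} {x : ι → X}
    (hx : ∀ k, x k ∈ levelSet T Φ p α (δ k) (n k)) (i : ℕ) :
    Tendsto (fun k => birkhoffAverage ℝ T (Φ i) (n k) (x k)) l (𝓝 (α i)) := by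
  refine tendsto_iff_norm_sub_tendsto_zero.2 (squeeze_zero (fun _ => norm_nonneg _) (fun k => ?_)
    (by simpa using hδ.div_const (p i)))
  rw [le_div_iff₀' (hp i), Real.norm_eq_abs, ← birkhoffAvgR_eq_birkhoffAverage]
  exact (mul_abs_birkhoffAvgR_sub_lt_of_mem_levelSet (fun i => (hp i).le) hB hpB hpα (hx k) i).le

lemma tendsto_birkhoffAverage_of_mem_levelSet_integral [TopologicalSpace X] [CompactSpace X]
    [MeasurableSpace X] {T : X → X} {Φ : ℕ → C(X, ℝ)} {p : ℕ → ℝ} {μ : Measure X}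
    [IsFiniteMeasure μ] (hp : ∀ i, 0 < p i)
    (hsum : Summable fun i => p i * ‖Φ i‖) {ι : Type*} {l : Filter ι} {δ : ι → ℝ}
    (hδ : Tendsto δ l (𝓝 0)) {n : ι → ℕ} {x : ι → X}
    (hx : ∀ k, x k ∈ levelSet T (fun i => Φ i) p (fun i => ∫ x, Φ i x ∂μ) (δ k) (n k)) (i : ℕ) :
    Tendsto (fun k => birkhoffAverage ℝ T (Φ i) (n k) (x k)) l (𝓝 (∫ x, Φ i x ∂μ)) := by
  refine tendsto_birkhoffAverage_of_mem_levelSet hp (fun i => (Φ i).norm_coe_le_norm) hsum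
    ((hsum.mul_right (μ.real univ)).of_nonneg_of_le
      (fun i => mul_nonneg (hp i).le (abs_nonneg _)) fun i => ?_) hδ hx i
  rw [mul_assoc]
  exact mul_le_mul_of_nonneg_left
    (norm_integral_le_of_norm_le_const (.of_forall (Φ i).norm_coe_le_norm)) (hp i).le

section Generic

variable [TopologicalSpace X] [CompactSpace X]

lemma lipschitzWith_birkhoffAverage_continuousMap (T : X → X) (n : ℕ) (x : X) :
    LipschitzWith 1 fun f : C(X, ℝ) => birkhoffAverage ℝ T f n x := by
  refine LipschitzWith.of_dist_le_mul fun f g => ?_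
  rw [NNReal.coe_one, one_mul, dist_eq_norm, dist_eq_norm, ← Pi.sub_apply, ← Pi.sub_apply,
    ← birkhoffAverage_sub]
  exact norm_birkhoffAverage_le (f - g).norm_coe_le_norm n x

variable [MeasurableSpace X] [OpensMeasurableSpace X] {μ : Measure X} [IsFiniteMeasure μ]

lemma integrable_continuousMap (f : C(X, ℝ)) : Integrable f μ :=
  f.continuous.integrable_of_hasCompactSupport (.of_compactSpace f)

lemma lipschitzWith_integral_continuousMap :
    LipschitzWith ⟨μ.real univ, measureReal_nonneg⟩ fun f : C(X, ℝ) => ∫ x, f x ∂μ := by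
  refine LipschitzWith.of_dist_le_mul fun f g => ?_
  rw [dist_eq_norm, dist_eq_norm, mul_comm,
    ← integral_sub (integrable_continuousMap f) (integrable_continuousMap g)]
  exact norm_integral_le_of_norm_le_const (.of_forall (f - g).norm_coe_le_norm)

lemma isGeneric_of_dense_span {T : X → X} {x : X} {s : Set C(X, ℝ)}
    (hs : Dense (Submodule.span ℝ s : Set C(X, ℝ)))
    (h : ∀ f ∈ s, Tendsto (fun n => birkhoffAverage ℝ T f n x) atTop (𝓝 (∫ y, f y ∂μ))) :
    IsGeneric T μ x := by
  have hclosed : IsClosed {f : C(X, ℝ) |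
      Tendsto (fun n => birkhoffAverage ℝ T f n x) atTop (𝓝 (∫ y, f y ∂μ))} :=
    (LipschitzWith.uniformEquicontinuous _ 1 fun n =>
      lipschitzWith_birkhoffAverage_continuousMap T n x).equicontinuous.isClosed_setOfPred_tendsto
        lipschitzWith_integral_continuousMap.continuous
  have hspan (f : C(X, ℝ)) (hf : f ∈ Submodule.span ℝ s) :
      Tendsto (fun n => birkhoffAverage ℝ T f n x) atTop (𝓝 (∫ y, f y ∂μ)) := by
    induction hf using Submodule.span_induction with
    | mem f hf => exact h f hf
    | zero => simp [birkhoffAverage, birkhoffSum]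
    | add f g _ _ hf hg =>
      simpa only [← integral_add (integrable_continuousMap f) (integrable_continuousMap g),
        ← Pi.add_apply, ← birkhoffAverage_add, ← ContinuousMap.coe_add] using hf.add hg
    | smul c f _ hf =>
      simp only [ContinuousMap.smul_apply, integral_smul]
      refine (hf.const_smul c).congr fun n => ?_
      exact map_birkhoffAverage ℝ ℝ (AddMonoidHom.mulLeft c) T f n x
  intro f
  simpa only [← birkhoffAvgR_eq_birkhoffAverage] using! hclosed.closure_subset_iff.2 hspan (hs f)

end Generic

lemma dense_span_of_nonempty_interior_closure {𝕜 E : Type*} [NontriviallyNormedField 𝕜]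
    [NormedAddCommGroup E] [NormedSpace 𝕜 E] {s : Set E} (hs : (interior (closure s)).Nonempty) :
    Dense (Submodule.span 𝕜 s : Set E) :=
  Submodule.dense_iff_topologicalClosure_eq_top.2 <| Submodule.eq_top_of_nonempty_interior' _ <|
    hs.mono <| interior_mono <| closure_mono Submodule.subset_span

lemma ShadowsConcatenation.isGeneric [PseudoMetricSpace X] [CompactSpace X] [MeasurableSpace X]
    [OpensMeasurableSpace X] {μ : Measure X} [IsFiniteMeasure μ] {T : X → X} {g ℓ : ℕ → ℕ}
    {x : ℕ → X} {ρ : ℕ → ℝ} {y : X} (hy : ShadowsConcatenation T g ℓ x ρ y)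
    (hgℓ : IsSlowBlockLayout g ℓ) (hρ : Tendsto ρ atTop (𝓝 0)) {s : Set C(X, ℝ)}
    (hs : Dense (Submodule.span ℝ s : Set C(X, ℝ)))
    (hx : ∀ f ∈ s,
      Tendsto (fun i => birkhoffAverage ℝ T f (ℓ i) (x i)) atTop (𝓝 (∫ y, f y ∂μ))) :
    IsGeneric T μ y :=
  isGeneric_of_dense_span hs fun f hf => hy.tendsto_birkhoffAverage hgℓ hρ
    (CompactSpace.uniformContinuous_of_continuous f.continuous) (C := ‖f‖₊)
    f.norm_coe_le_norm (hx f hf)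

/-! ### The entropy of generic points -/

lemma exists_isSlowBlockLayout {M n : ℕ → ℕ} (hn : ∀ k, 0 < n k) (hMn : ∀ k, k * M k ≤ n k) :
    ∃ b κ, GaloisConnection b κ ∧ IsSlowBlockLayout (M ∘ κ) (n ∘ κ) := by
  obtain ⟨b, κ, hbκ, hslow⟩ := exists_galoisConnection_comp_le fun k => k * n k
  have hκ : Tendsto κ atTop atTop := tendsto_atTop_of_galoisConnection hbκ
  exact ⟨b, κ, hbκ, fun i => hn _,
    isLittleO_of_tendsto_atTop_of_mul_le hκ (.of_forall fun i => hMn _),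
    isLittleO_of_tendsto_atTop_of_mul_le hκ (hslow.mono fun i hi =>
      hi.trans (strictMono_blockStart (M ∘ κ) fun i => hn (κ i)).le_apply)⟩

section Entropy

variable [PseudoMetricSpace X] [CompactSpace X] [MeasurableSpace X] [OpensMeasurableSpace X]
  {T : X → X} {Φ : ℕ → C(X, ℝ)} {p : ℕ → ℝ} {μ : Measure X} [IsFiniteMeasure μ]

lemma le_bowenEntropyRes_isGeneric_of_lt_limsup (hT : Continuous T)
    (hspec : SpecificationProperty T)
    (hΦ : Dense (Submodule.span ℝ (range Φ) : Set C(X, ℝ))) (hp : ∀ i, 0 < p i)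
    (hsum : Summable fun i => p i * ‖Φ i‖) {ε : ℝ} (hε : 0 < ε) {s : ℝ≥0}
    (hs : ∀ δ > 0, (s : ℝ≥0∞) < limsup (fun n : ℕ => ENNReal.ofReal (Real.log
      (coverNum T (levelSet T (fun i => Φ i) p (fun i => ∫ x, Φ i x ∂μ) δ n) n ε) / n)) atTop) :
    (s : ℝ≥0∞) ≤ bowenEntropyRes T {x | IsGeneric T μ x} (ε / 4) := by
  obtain ⟨r, hr, hrε, hr_zero⟩ := exists_seq_strictAnti_tendsto' (by positivity : 0 < ε / 4)
  choose M hM using fun K => hspec (r K - r (K + 1)) (sub_pos.2 (hr K.lt_succ_self))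
  choose n hn W hWδ hW hcard using fun k : ℕ => exists_pairwiseDisjoint_bowenBall_of_lt_limsup T _
    hε (hs (1 / (k + 1)) Nat.one_div_pos_of_nat) (max 1 (k * M k))
  obtain ⟨b, κ, hbκ, hlayout⟩ := exists_isSlowBlockLayout
    (fun k => (le_max_left _ _).trans (hn k)) fun k => (le_max_right _ _).trans (hn k)
  have hκ : Tendsto κ atTop atTop := tendsto_atTop_of_galoisConnection hbκ
  have hε2 : ε / 2 = 2 * (ε / 4) := by ring
  rw [hε2] at hW
  refine le_bowenEntropyRes_of_shadowsConcatenation hlayout (W := W ∘ κ) (fun i => hW (κ i))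
    (fun i => hcard (κ i)) fun ω => ?_
  obtain ⟨y, hy⟩ := exists_shadowsConcatenation hT hr (fun K => (hrε K).1.le)
    (fun K => (hM K).2) hbκ hlayout.length_pos fun i => (ω i : X)
  refine ⟨y, hy.isGeneric hlayout (hr_zero.comp hκ) hΦ ?_, hy.mono fun i => (hrε (κ i)).2.le⟩
  rintro _ ⟨i, rfl⟩
  exact tendsto_birkhoffAverage_of_mem_levelSet_integral hp hsum
    (tendsto_one_div_add_atTop_nhds_zero_nat.comp hκ) (fun k => hWδ (κ k) (ω k).2) i

theorem entropy_of_generic_ge_lambda_general (hT : Continuous T) (hspec : SpecificationProperty T)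
    (hΦ : Dense (Submodule.span ℝ (range Φ) : Set C(X, ℝ))) (hp : ∀ i, 0 < p i)
    (hsum : Summable fun i => p i * ‖Φ i‖) :
    LambdaPhi T (fun i => Φ i) p (fun i => ∫ x, Φ i x ∂μ) ≤
      bowenEntropy T {x | IsGeneric T μ x} := by
  refine iSup₂_le fun ε hε => ENNReal.le_of_forall_nnreal_lt fun s hs => ?_
  exact (le_bowenEntropyRes_isGeneric_of_lt_limsup hT hspec hΦ hp hsum hε fun δ hδ =>
    hs.trans_le (iInf₂_le δ hδ)).trans (le_iSup₂_of_le (ε / 4) (by positivity) le_rfl)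

end Entropy

/-- **Proposition 3.3.** In a system with the specification property, for `(Φ_i)` dense in
the unit ball of `C(X)`, `(p_i)` positive with `Σ p_i = 1`, `μ` invariant and
`α_i = ∫ Φ_i dμ`, the Bowen entropy of the set of `μ`-generic points satisfies
`h_top(G_μ) ≥ Λ_Φ(α)`. -/
theorem entropy_of_generic_ge_lambda {X : Type*} [MetricSpace X] [CompactSpace X]
    [MeasurableSpace X] [BorelSpace X] (T : X → X) (hT : Continuous T)
    (hspec : SpecificationProperty T)
    (Φ : ℕ → X → ℝ) (hΦc : ∀ i, Continuous (Φ i)) (hΦb : ∀ i x, |Φ i x| ≤ 1)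
    (hdense : ∀ f : C(X, ℝ), ‖f‖ ≤ 1 → ∀ ε : ℝ, 0 < ε → ∃ i, ∀ x, |Φ i x - f x| < ε)
    (p : ℕ → ℝ) (hp : ∀ i, 0 < p i) (hps : Summable p) (hp1 : ∑' i, p i = 1)
    (μ : Measure X) (hμ : IsProbabilityMeasure μ) (hinv : MeasurePreserving T μ μ)
    (α : ℕ → ℝ) (hα : ∀ i, α i = ∫ x, Φ i x ∂μ) :
    LambdaPhi T Φ p α ≤ bowenEntropy T {x : X | IsGeneric T μ x} := by
  obtain rfl : α = fun i => ∫ x, Φ i x ∂μ := funext hα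
  let Ψ (i : ℕ) : C(X, ℝ) := ⟨Φ i, hΦc i⟩
  have hΨ (i : ℕ) : ‖Ψ i‖ ≤ 1 := (ContinuousMap.norm_le _ zero_le_one).2 (hΦb i)
  have hball : Metric.ball 0 1 ⊆ closure (range Ψ) := fun f hf => Metric.mem_closure_range_iff.2
    fun ε hε => (hdense f (mem_ball_zero_iff.1 hf).le ε hε).imp fun i hi => by
      rw [dist_comm]
      exact (ContinuousMap.dist_lt_iff hε).2 hi
  exact entropy_of_generic_ge_lambda_general (Φ := Ψ) hT hspec
    (dense_span_of_nonempty_interior_closure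
      ⟨0, interior_maximal hball Metric.isOpen_ball (Metric.mem_ball_self one_pos)⟩) hp
    (hps.of_nonneg_of_le (fun i => mul_nonneg (hp i).le (norm_nonneg _)) fun i =>
      mul_le_of_le_one_right (hp i).le (hΨ i))
end
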